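/- arXiv:1709.09924 — 6 statements merged into one kernel-verified Lean document; each statement's English description precedes it below -/
import Mathlib

section
/- Let L > 0. There exist λ ∈ ℂ and three times continuously differentiable functions θ, u : [0,L] → ℂ, not both identically zero, satisfying −u′(x) − u‴(x) = λ·θ(x) and −θ′(x) − θ‴(x) = λ·u(x) for all x ∈ [0,L], with boundary conditions θ(0) = θ(L) = θ′(0) = θ″(L) = 0 and u(0) = u(L) = u′(L) = 0, together with the additional condition θ″(0) = 0, if and only if L ∈ 𝒩₃. -/
open Set

/-- The set 𝒩 = { (2π/√3)·√(k² + k·l + l²) : k, l positive integers }. -/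
def criticalN : Set ℝ :=
  {x | ∃ k l : ℕ, 0 < k ∧ 0 < l ∧
    x = (2 * Real.pi / Real.sqrt 3) * Real.sqrt ((k : ℝ)^2 + (k : ℝ) * (l : ℝ) + (l : ℝ)^2)}

/-- The set ℛ = { π·√((1/2+2k)² + (1/2+2l)² + (1/2+2k)(1/2+2l)) : k, l ∈ ℤ, k ≠ l }. -/
def criticalR : Set ℝ :=
  {x | ∃ k l : ℤ, k ≠ l ∧
    x = Real.pi * Real.sqrt ((1/2 + 2*(k : ℝ))^2 + (1/2 + 2*(l : ℝ))^2
      + (1/2 + 2*(k : ℝ)) * (1/2 + 2*(l : ℝ)))}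

/-- The set 𝒩₃ = { (2π/√3)·√(k² + k·l + l²) : k, l positive integers, 3 ∣ 2k + l }. -/
def criticalN3 : Set ℝ :=
  {x | ∃ k l : ℕ, 0 < k ∧ 0 < l ∧ 3 ∣ 2 * k + l ∧
    x = (2 * Real.pi / Real.sqrt 3) * Real.sqrt ((k : ℝ)^2 + (k : ℝ) * (l : ℝ) + (l : ℝ)^2)}

namespace Bsq

lemma const_of_deriv {L : ℝ} (hL : 0 < L) {P P' : ℝ → ℂ}
    (h : ∀ x, HasDerivAt P (P' x) x) (h0 : ∀ x ∈ Icc (0:ℝ) L, P' x = 0) :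
    ∀ x ∈ Icc (0:ℝ) L, P x = P 0 := by
  apply constant_of_has_deriv_right_zero
  · exact fun x _ => (h x).continuousAt.continuousWithinAt
  · intro x hx
    have := (h x).hasDerivWithinAt (s := Ici x)
    rwa [h0 x ⟨hx.1, hx.2.le⟩] at this

lemma hasDeriv_exp (s : ℂ) (x : ℝ) :
    HasDerivAt (fun x : ℝ => Complex.exp (s * x)) (s * Complex.exp (s * x)) x := by
  have h : HasDerivAt (fun x : ℝ => s * (x:ℂ)) s x := by
    simpa using (Complex.ofRealCLM.hasDerivAt (x := x)).const_mul s
  simpa [mul_comm] using h.cexp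

lemma hasDeriv_id (x : ℝ) : HasDerivAt (fun x : ℝ => (x:ℂ)) 1 x := by
  simpa using (hasDerivAt_id x).ofReal_comp

section
variable {L : ℝ} {v v1 v2 v3 : ℝ → ℂ} {lam s : ℂ}

lemma cons1 (hL : 0 < L)
    (h0 : ∀ x, HasDerivAt v (v1 x) x) (h1 : ∀ x, HasDerivAt v1 (v2 x) x)
    (h2 : ∀ x, HasDerivAt v2 (v3 x) x)
    (ode : ∀ x ∈ Icc (0:ℝ) L, v1 x + v3 x = -lam * v x) (hs : s ^ 3 + s + lam = 0) :
    ∀ x ∈ Icc (0:ℝ) L, Complex.exp (-s * x) * (v2 x + s * v1 x + (s ^ 2 + 1) * v x)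
      = v2 0 + s * v1 0 + (s ^ 2 + 1) * v 0 := by
  intro x hx
  have key := const_of_deriv hL
    (P := fun x => Complex.exp (-s * x) * (v2 x + s * v1 x + (s ^ 2 + 1) * v x))
    (fun x => (hasDeriv_exp (-s) x).mul
      (((h2 x).add ((h1 x).const_mul s)).add ((h0 x).const_mul (s ^ 2 + 1)))) ?_ x hx
  · simpa using key
  · intro x hx
    have := ode x hx
    simp only [Pi.add_apply]
    linear_combination Complex.exp (-s * x) * this - Complex.exp (-s * x) * v x * hs

lemma cons2 (hL : 0 < L)
    (h0 : ∀ x, HasDerivAt v (v1 x) x) (h1 : ∀ x, HasDerivAt v1 (v2 x) x)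
    (h2 : ∀ x, HasDerivAt v2 (v3 x) x)
    (ode : ∀ x ∈ Icc (0:ℝ) L, v1 x + v3 x = -lam * v x) (hs : s ^ 3 + s + lam = 0)
    (hd : 3 * s ^ 2 + 1 = 0) :
    ∀ x ∈ Icc (0:ℝ) L, Complex.exp (-s * x) * (v1 x + 2 * s * v x
        - x * (v2 x + s * v1 x + (s ^ 2 + 1) * v x))
      = v1 0 + 2 * s * v 0 := by
  intro x hx
  have key := const_of_deriv hL
    (P := fun x => Complex.exp (-s * x) * (v1 x + 2 * s * v x
        - x * (v2 x + s * v1 x + (s ^ 2 + 1) * v x)))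
    (fun x => (hasDeriv_exp (-s) x).mul
      (((h1 x).add ((h0 x).const_mul (2 * s))).sub ((hasDeriv_id x).mul
      (((h2 x).add ((h1 x).const_mul s)).add ((h0 x).const_mul (s ^ 2 + 1)))))) ?_ x hx
  · simpa using key
  · intro x hx
    have := ode x hx
    simp only [Pi.add_apply, Pi.sub_apply, Pi.mul_apply]
    linear_combination (-x * Complex.exp (-s * x)) * this
      + x * Complex.exp (-s * x) * v x * hs - Complex.exp (-s * x) * v x * hd
end

/-- three roots with multiplicity -/
def Roots (s t r : ℂ) : Prop := (s ≠ t ∧ s ≠ r ∧ t ≠ r) ∨ (s = t ∧ r = -2 * s ∧ 3 * s ^ 2 + 1 = 0)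

lemma quad_zero {s t r p q c : ℂ} (h : Roots s t r)
    (h1 : p * s ^ 2 + q * s + c = 0) (h2 : p * t ^ 2 + q * t + c = 0)
    (h3 : p * r ^ 2 + q * r + c = 0) (hd : 3 * s ^ 2 + 1 = 0 → 2 * p * s + q = 0) :
    p = 0 ∧ q = 0 ∧ c = 0 := by
  have fin : p = 0 → q = 0 → p = 0 ∧ q = 0 ∧ c = 0 := by
    rintro rfl rfl; simpa using h1
  rcases h with ⟨a, b, d⟩ | ⟨rfl, rfl, e⟩
  · have e1 : p * (s + t) + q = 0 := by
      apply mul_left_cancel₀ (sub_ne_zero.2 a); linear_combination h1 - h2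
    have e2 : p * (s + r) + q = 0 := by
      apply mul_left_cancel₀ (sub_ne_zero.2 b); linear_combination h1 - h3
    have e3 : p = 0 := by
      apply mul_left_cancel₀ (sub_ne_zero.2 d); linear_combination e1 - e2
    exact fin e3 (by simpa [e3] using e1)
  · have e1 := hd e
    have e3 : p = 0 := by
      linear_combination p * e - (h3 - h1 + 3 * s * e1) / 3
    exact fin e3 (by simpa [e3] using e1)

lemma exists_roots (lam : ℂ) : ∃ s t r : ℂ, Roots s t r ∧ s + t + r = 0 ∧
    s * t + s * r + t * r = 1 ∧ s * t * r = -lam := by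
  obtain ⟨s, hs⟩ : ∃ s : ℂ, s ^ 3 + s + lam = 0 := by
    have hdeg : (Polynomial.X ^ 3 + Polynomial.X + Polynomial.C lam : Polynomial ℂ).degree = 3 := by
      compute_degree!
    obtain ⟨s, hs⟩ := IsAlgClosed.exists_root
      (Polynomial.X ^ 3 + Polynomial.X + Polynomial.C lam : Polynomial ℂ) (by rw [hdeg]; norm_num)
    exact ⟨s, by simpa using hs⟩
  obtain ⟨δ, hδ⟩ := IsAlgClosed.exists_pow_nat_eq (-3 * s ^ 2 - 4 : ℂ) (n := 2) (by norm_num)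
  obtain ⟨t, r, e1, e2, e3⟩ : ∃ t r : ℂ, s + t + r = 0 ∧
      s * t + s * r + t * r = 1 ∧ s * t * r = -lam :=
    ⟨(-s + δ) / 2, (-s - δ) / 2, by ring, by linear_combination -hδ / 4,
      by linear_combination hs - s * hδ / 4⟩
  by_cases a : s = t
  · subst a
    have : r = -2 * s := by linear_combination e1
    exact ⟨s, s, r, Or.inr ⟨rfl, this, by subst this; linear_combination -e2⟩, e1, e2, e3⟩
  by_cases b : s = r
  · subst b
    have : t = -2 * s := by linear_combination e1
    exact ⟨s, s, t, Or.inr ⟨rfl, this, by subst this; linear_combination -e2⟩,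
      by linear_combination e1, by linear_combination e2, by linear_combination e3⟩
  by_cases d : t = r
  · subst d
    have : s = -2 * t := by linear_combination e1
    exact ⟨t, t, s, Or.inr ⟨rfl, this, by subst this; linear_combination -e2⟩,
      by linear_combination e1, by linear_combination e2, by linear_combination e3⟩
  exact ⟨s, t, r, Or.inl ⟨a, b, d⟩, e1, e2, e3⟩

/-- zero Cauchy data gives the zero solution -/
lemma uniq {L : ℝ} {v v1 v2 v3 : ℝ → ℂ} {lam s t r : ℂ} (hL : 0 < L)
    (h0 : ∀ x, HasDerivAt v (v1 x) x) (h1 : ∀ x, HasDerivAt v1 (v2 x) x)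
    (h2 : ∀ x, HasDerivAt v2 (v3 x) x)
    (ode : ∀ x ∈ Icc (0:ℝ) L, v1 x + v3 x = -lam * v x)
    (hR : Roots s t r) (hs : s ^ 3 + s + lam = 0) (ht : t ^ 3 + t + lam = 0)
    (hr : r ^ 3 + r + lam = 0) (i0 : v 0 = 0) (i1 : v1 0 = 0) (i2 : v2 0 = 0) :
    ∀ x ∈ Icc (0:ℝ) L, v x = 0 := by
  intro x hx
  have aux : ∀ z : ℂ, z ^ 3 + z + lam = 0 → v x * z ^ 2 + v1 x * z + (v2 x + v x) = 0 := by
    intro z hz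
    have := cons1 hL h0 h1 h2 ode hz x hx
    simp only [i0, i1, i2, mul_zero, add_zero] at this
    have := (mul_eq_zero.1 this).resolve_left (Complex.exp_ne_zero _)
    linear_combination this
  refine (quad_zero hR (aux s hs) (aux t ht) (aux r hr) ?_).1
  intro hd
  have := cons2 hL h0 h1 h2 ode hs hd x hx
  simp only [i0, i1, mul_zero, add_zero] at this
  have := (mul_eq_zero.1 this).resolve_left (Complex.exp_ne_zero _)
  linear_combination this + x * aux s hs

lemma mem_of_ordered {L : ℝ} (hL : 0 < L) {m n p : ℤ} (h1 : n < m) (h2 : p < n)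
    (hs : m + n + p = 0)
    (h : L ^ 2 = -(4 * Real.pi ^ 2 * ((m:ℝ) * n + m * p + n * p))) : L ∈ criticalN3 := by
  obtain ⟨k, hk⟩ := Int.eq_ofNat_of_zero_le (sub_nonneg.2 h1.le)
  obtain ⟨l, hl⟩ := Int.eq_ofNat_of_zero_le (sub_nonneg.2 h2.le)
  refine ⟨k, l, by omega, by omega, by omega, ?_⟩
  have e1 : (k:ℝ) = m - n := by exact_mod_cast hk.symm
  have e2 : (l:ℝ) = n - p := by exact_mod_cast hl.symm
  have e3 : (p:ℝ) = -m - n := by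
    have : p = -m - n := by omega
    exact_mod_cast this
  have hpos : (0:ℝ) ≤ (k:ℝ)^2 + (k : ℝ) * (l : ℝ) + (l : ℝ)^2 := by positivity
  rw [← sq_eq_sq₀ hL.le (by positivity), mul_pow, div_pow, Real.sq_sqrt hpos,
    Real.sq_sqrt (by norm_num), h, e1, e2, e3]
  ring

lemma mem_of_ints {L : ℝ} (hL : 0 < L) {m n p : ℤ} (a : m ≠ n) (b : m ≠ p) (c : n ≠ p)
    (hs : m + n + p = 0)
    (h : L ^ 2 = -(4 * Real.pi ^ 2 * ((m:ℝ) * n + m * p + n * p))) : L ∈ criticalN3 := by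
  rcases lt_or_gt_of_ne a with a | a <;> rcases lt_or_gt_of_ne b with b | b <;>
    rcases lt_or_gt_of_ne c with c | c
  · exact mem_of_ordered hL c a (by omega) (by rw [h]; ring)
  · exact mem_of_ordered hL c b (by omega) (by rw [h]; ring)
  · omega
  · exact mem_of_ordered hL a b (by omega) (by rw [h]; ring)
  · exact mem_of_ordered hL b a (by omega) (by rw [h]; ring)
  · omega
  · exact mem_of_ordered hL b c (by omega) (by rw [h]; ring)
  · exact mem_of_ordered hL a c (by omega) h

/-- purely algebraic part of the direct implication -/
lemma algebra {L : ℝ} (hL : 0 < L) {s t r a b c d : ℂ} (hR : Roots s t r)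
    (e1 : s + t + r = 0) (e2 : s * t + s * r + t * r = 1)
    (hne : ¬ (a = 0 ∧ b = 0))
    (hv : ∀ z, (z = s ∨ z = t ∨ z = r) → a + z * b = Complex.exp (-z * L) * (c + z * d))
    (hw : ∀ z, (z = s ∨ z = t ∨ z = r) → a - z * b = Complex.exp (z * L) * (c + z * d))
    (hv' : 3 * s ^ 2 + 1 = 0 → Complex.exp (-s * L) * (d - L * (c + s * d)) = b)
    (hw' : 3 * s ^ 2 + 1 = 0 → Complex.exp (s * L) * (d + L * (c + s * d)) = -b) :
    L ∈ criticalN3 := by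
  have hee : ∀ z : ℂ, Complex.exp (-z * L) * Complex.exp (z * L) = 1 := by
    intro z; rw [← Complex.exp_add]; simp
  have hq : ∀ z, (z = s ∨ z = t ∨ z = r) →
      (b ^ 2 + d ^ 2) * z ^ 2 + (2 * c * d) * z + (c ^ 2 - a ^ 2) = 0 := by
    intro z hz
    have h1 := hv z hz
    have h2 := hw z hz
    linear_combination -(a - z * b) * h1 - Complex.exp (-z * L) * (c + z * d) * h2
      - (c + z * d) ^ 2 * hee z
  have hLc : (L:ℂ) ≠ 0 := by exact_mod_cast hL.ne'
  obtain ⟨q1, q2, q3⟩ := quad_zero hR (hq s (by simp)) (hq t (by simp)) (hq r (by simp)) (by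
    intro hd
    have h1 := hv s (by simp)
    have h2 := hw s (by simp)
    have h3 := hv' hd
    have h4 := hw' hd
    linear_combination (a - s * b) * h3 - Complex.exp (-s * L) * (d - L * (c + s * d)) * h2
      + (a + s * b) * h4 - Complex.exp (s * L) * (d + L * (c + s * d)) * h1
      - 2 * d * (c + s * d) * hee s)
  have hprod : Complex.exp (s * L) * Complex.exp (t * L) * Complex.exp (r * L) = 1 := by
    rw [← Complex.exp_add, ← Complex.exp_add, ← add_mul, ← add_mul, e1]; simp
  have hcd : c = 0 ∨ d = 0 := by simpa using q2
  rcases hcd with rfl | rfl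
  · exfalso
    have ha : a = 0 := by simpa using q3
    subst ha
    have hb : b ≠ 0 := fun h => hne ⟨rfl, h⟩
    have hd : d ≠ 0 := by rintro rfl; apply hb; simpa using q1
    have hz : ∀ z, (z = s ∨ z = t ∨ z = r) → z ≠ 0 → Complex.exp (z * L) * d = -b := by
      intro z hz h0
      apply mul_left_cancel₀ h0
      linear_combination -hw z hz
    by_cases h0 : s ≠ 0 ∧ t ≠ 0 ∧ r ≠ 0
    · have f1 := hz s (by simp) h0.1
      have f2 := hz t (by simp) h0.2.1
      have f3 := hz r (by simp) h0.2.2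
      have f : d ^ 3 = -b ^ 3 := by
        calc d ^ 3 = (Complex.exp (s * L) * Complex.exp (t * L) * Complex.exp (r * L)) * d ^ 3 := by
              rw [hprod, one_mul]
          _ = (Complex.exp (s * L) * d) * (Complex.exp (t * L) * d) * (Complex.exp (r * L) * d) := by
              ring
          _ = -b ^ 3 := by rw [f1, f2, f3]; ring
      -- d^3 = -b^3 and d^2 = -b^2 give d = b, hence b = 0
      have g : b ^ 2 * (d - b) = 0 := by linear_combination -f + d * q1
      have g' : d = b := by
        have := (mul_eq_zero.1 g).resolve_left (pow_ne_zero 2 hb)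
        linear_combination this
      subst g'
      apply hb
      have : d ^ 2 = 0 := by linear_combination q1 / 2
      simpa using this
    · have key : ∀ y z, (y = s ∨ y = t ∨ y = r) → (z = s ∨ z = t ∨ z = r) → y ≠ 0 → z = -y →
          False := by
        intro y z hy hz' hy0 hzy
        have f1 := hz y hy hy0
        have f2 := hz z hz' (by rw [hzy]; simpa using hy0)
        rw [hzy] at f2
        have : d ^ 2 = b ^ 2 := by
          linear_combination f1 * Complex.exp (-y * L) * d - b * f2 - d ^ 2 * hee y
        have : b ^ 2 = 0 := by linear_combination (q1 - this) / 2
        exact hb (by simpa using this)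
      rcases (by tauto : s = 0 ∨ t = 0 ∨ r = 0) with rfl | rfl | rfl
      · exact key t r (by simp) (by simp) (by rintro rfl; simp at e2) (by linear_combination e1)
      · exact key s r (by simp) (by simp) (by rintro rfl; simp at e2) (by linear_combination e1)
      · exact key s t (by simp) (by simp) (by rintro rfl; simp at e2) (by linear_combination e1)
  · have hb : b = 0 := by simpa using q1
    subst hb
    have ha : a ≠ 0 := fun h => hne ⟨h, rfl⟩
    have hc : c ≠ 0 := by rintro rfl; apply ha; simpa using q3
    have hz : ∀ z, (z = s ∨ z = t ∨ z = r) → Complex.exp (z * L) * c = a := by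
      intro z hz
      linear_combination -hw z hz
    have f1 := hz s (by simp)
    have f2 := hz t (by simp)
    have f3 := hz r (by simp)
    have f : c ^ 3 = a ^ 3 := by
      calc c ^ 3 = (Complex.exp (s * L) * Complex.exp (t * L) * Complex.exp (r * L)) * c ^ 3 := by
            rw [hprod, one_mul]
        _ = (Complex.exp (s * L) * c) * (Complex.exp (t * L) * c) * (Complex.exp (r * L) * c) := by
            ring
        _ = a ^ 3 := by rw [f1, f2, f3]; ring
    have g : c = a := by
      have : a ^ 2 * (c - a) = 0 := by linear_combination f - c * q3
      have := (mul_eq_zero.1 this).resolve_left (pow_ne_zero 2 ha)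
      linear_combination this
    subst g
    have one : ∀ z, (z = s ∨ z = t ∨ z = r) → ∃ n : ℤ, z * L = n * (2 * Real.pi * Complex.I) := by
      intro z h
      rw [← Complex.exp_eq_one_iff]
      apply mul_right_cancel₀ hc
      rw [hz z h, one_mul]
    rcases hR with ⟨d1, d2, d3⟩ | ⟨_, _, hd⟩
    · obtain ⟨m, hm⟩ := one s (by simp)
      obtain ⟨n, hn⟩ := one t (by simp)
      obtain ⟨p, hp⟩ := one r (by simp)
      refine mem_of_ints hL (m := m) (n := n) (p := p) ?_ ?_ ?_ ?_ ?_
      · rintro rfl; exact d1 (mul_right_cancel₀ hLc (hm.trans hn.symm))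
      · rintro rfl; exact d2 (mul_right_cancel₀ hLc (hm.trans hp.symm))
      · rintro rfl; exact d3 (mul_right_cancel₀ hLc (hn.trans hp.symm))
      · have : ((m + n + p : ℤ) : ℂ) * (2 * Real.pi * Complex.I) = 0 := by
          push_cast
          linear_combination L * e1 - hm - hn - hp
        have := (mul_eq_zero.1 this).resolve_right Complex.two_pi_I_ne_zero
        exact_mod_cast this
      · have : (L:ℂ) ^ 2 = -(4 * Real.pi ^ 2 * ((m:ℂ) * n + m * p + n * p)) := by
          have hI := Complex.I_sq
          have k1 : (s * L) * (t * L) + (s * L) * (r * L) + (t * L) * (r * L) = L ^ 2 := by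
            linear_combination (L:ℂ) ^ 2 * e2
          rw [hm, hn, hp] at k1
          linear_combination -k1 + 4 * Real.pi ^ 2 * ((m:ℂ) * n + m * p + n * p) * hI
        exact_mod_cast this
    · exfalso
      have h3 := hv' hd
      have : Complex.exp (-s * L) * (L * c) = 0 := by linear_combination -h3
      simp [hc, hLc, Complex.exp_ne_zero] at this

lemma hasDerivs {f : ℝ → ℂ} (hf : ContDiff ℝ 3 f) :
    (∀ x, HasDerivAt f (deriv f x) x) ∧ (∀ x, HasDerivAt (deriv f) (deriv (deriv f) x) x) ∧
    (∀ x, HasDerivAt (deriv (deriv f)) (deriv (deriv (deriv f)) x) x) := by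
  have h3 : ContDiff ℝ (2 + 1) f := by convert hf using 1; norm_num
  have h2 : ContDiff ℝ 2 (deriv f) := (contDiff_succ_iff_deriv.1 h3).2.2
  have h2' : ContDiff ℝ (1 + 1) (deriv f) := by convert h2 using 1; norm_num
  have h1 : ContDiff ℝ 1 (deriv (deriv f)) := (contDiff_succ_iff_deriv.1 h2').2.2
  exact ⟨fun x => (hf.differentiable (by norm_num) x).hasDerivAt,
    fun x => (h2.differentiable (by norm_num) x).hasDerivAt,
    fun x => (h1.differentiable (by norm_num) x).hasDerivAt⟩

lemma forward {L : ℝ} (hL : 0 < L) {lam : ℂ} {θ u : ℝ → ℂ} (hθ : ContDiff ℝ 3 θ)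
    (hu : ContDiff ℝ 3 u) (hne : ¬(∀ x ∈ Icc (0 : ℝ) L, θ x = 0 ∧ u x = 0))
    (o1 : ∀ x ∈ Icc (0 : ℝ) L, -deriv u x - deriv (deriv (deriv u)) x = lam * θ x)
    (o2 : ∀ x ∈ Icc (0 : ℝ) L, -deriv θ x - deriv (deriv (deriv θ)) x = lam * u x)
    (b1 : θ 0 = 0) (b2 : θ L = 0) (b3 : deriv θ 0 = 0) (b4 : deriv (deriv θ) L = 0)
    (b5 : u 0 = 0) (b6 : u L = 0) (b7 : deriv u L = 0) (b8 : deriv (deriv θ) 0 = 0) :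
    L ∈ criticalN3 := by
  obtain ⟨t0, t1, t2⟩ := hasDerivs hθ
  obtain ⟨u0, u1, u2⟩ := hasDerivs hu
  obtain ⟨s, t, r, hR, e1, e2, e3⟩ := exists_roots lam
  have hroot : ∀ z, (z = s ∨ z = t ∨ z = r) → z ^ 3 + z + lam = 0 := by
    rintro z (rfl | rfl | rfl)
    · linear_combination z ^ 2 * e1 - z * e2 + e3
    · linear_combination z ^ 2 * e1 - z * e2 + e3
    · linear_combination z ^ 2 * e1 - z * e2 + e3
  have hroot' : ∀ z, (z = s ∨ z = t ∨ z = r) → (-z) ^ 3 + (-z) + (-lam) = 0 := by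
    intro z hz; linear_combination -hroot z hz
  have hRn : Roots (-s) (-t) (-r) := by
    rcases hR with ⟨a, b, c⟩ | ⟨a, b, c⟩
    · left; simpa using ⟨a, b, c⟩
    · right; exact ⟨by rw [a], by rw [b]; ring, by linear_combination c⟩
  have ov : ∀ x ∈ Icc (0:ℝ) L, (deriv θ x + deriv u x)
      + (deriv (deriv (deriv θ)) x + deriv (deriv (deriv u)) x) = -lam * (θ x + u x) := by
    intro x hx; linear_combination -o1 x hx - o2 x hx
  have ow : ∀ x ∈ Icc (0:ℝ) L, (deriv θ x - deriv u x)
      + (deriv (deriv (deriv θ)) x - deriv (deriv (deriv u)) x) = -(-lam) * (θ x - u x) := by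
    intro x hx; linear_combination o1 x hx - o2 x hx
  have v0 := fun x => (t0 x).add (u0 x)
  have v1 := fun x => (t1 x).add (u1 x)
  have v2 := fun x => (t2 x).add (u2 x)
  have w0 := fun x => (t0 x).sub (u0 x)
  have w1 := fun x => (t1 x).sub (u1 x)
  have w2 := fun x => (t2 x).sub (u2 x)
  have hLm : L ∈ Icc (0:ℝ) L := ⟨hL.le, le_rfl⟩
  refine algebra hL (a := deriv (deriv u) 0) (b := deriv u 0) (c := deriv (deriv u) L)
    (d := deriv θ L) hR e1 e2 ?_ ?_ ?_ ?_ ?_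
  · rintro ⟨ha, hb⟩
    apply hne
    intro x hx
    have hv := uniq hL v0 v1 v2 ov hR (hroot s (by simp)) (hroot t (by simp)) (hroot r (by simp))
      (by simp [b1, b5]) (by simp [b3, hb]) (by simp [b8, ha]) x hx
    have hw := uniq hL w0 w1 w2 ow hRn (hroot' s (by simp)) (hroot' t (by simp))
      (hroot' r (by simp)) (by simp [b1, b5]) (by simp [b3, hb]) (by simp [b8, ha]) x hx
    simp only [Pi.add_apply, Pi.sub_apply] at hv hw
    exact ⟨by linear_combination (hv + hw) / 2, by linear_combination (hv - hw) / 2⟩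
  · intro z hz
    have := cons1 hL v0 v1 v2 ov (hroot z hz) L hLm
    simp only [Pi.add_apply, b1, b2, b3, b4, b5, b6, b7, b8] at this
    linear_combination -this
  · intro z hz
    have := cons1 hL w0 w1 w2 ow (hroot' z hz) L hLm
    simp only [Pi.sub_apply, b1, b2, b3, b4, b5, b6, b7, b8, neg_neg] at this
    linear_combination this
  · intro hd
    have := cons2 hL v0 v1 v2 ov (hroot s (by simp)) hd L hLm
    simp only [Pi.add_apply, b1, b2, b3, b4, b5, b6, b7, b8] at this
    linear_combination this
  · intro hd
    have := cons2 hL w0 w1 w2 ow (hroot' s (by simp)) (by linear_combination hd) L hLm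
    simp only [Pi.sub_apply, b1, b2, b3, b4, b5, b6, b7, b8, neg_neg] at this
    linear_combination this

/-- combinations of exponentials used for the converse -/
noncomputable def G (s t r σ a b c : ℂ) (x : ℝ) : ℂ :=
  a * (Complex.exp (s * x) + σ * Complex.exp (-s * x))
  + b * (Complex.exp (t * x) + σ * Complex.exp (-t * x))
  + c * (Complex.exp (r * x) + σ * Complex.exp (-r * x))

lemma G_deriv (s t r σ a b c : ℂ) (x : ℝ) :
    HasDerivAt (G s t r σ a b c) (G s t r (-σ) (a * s) (b * t) (c * r) x) x := by
  have h : ∀ z : ℂ, HasDerivAt (fun x : ℝ => Complex.exp (z * x) + σ * Complex.exp (-z * x))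
      (z * Complex.exp (z * x) + σ * (-z * Complex.exp (-z * x))) x := fun z =>
    (hasDeriv_exp z x).add ((hasDeriv_exp (-z) x).const_mul σ)
  have := (((h s).const_mul a).add ((h t).const_mul b)).add ((h r).const_mul c)
  refine HasDerivAt.congr_deriv this ?_
  simp only [G]; ring

lemma G_deriv_eq (s t r σ a b c : ℂ) :
    deriv (G s t r σ a b c) = G s t r (-σ) (a * s) (b * t) (c * r) :=
  funext fun x => (G_deriv s t r σ a b c x).deriv

lemma G_contDiff (s t r σ a b c : ℂ) : ContDiff ℝ 3 (G s t r σ a b c) := by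
  have h : ∀ z : ℂ, ContDiff ℝ 3 (fun x : ℝ => Complex.exp (z * x)) := fun z =>
    (contDiff_const.mul Complex.ofRealCLM.contDiff).cexp
  have h' : ∀ z : ℂ, ContDiff ℝ 3
      (fun x : ℝ => Complex.exp (z * x) + σ * Complex.exp (-z * x)) := fun z =>
    (h z).add (contDiff_const.mul (h (-z)))
  exact ((contDiff_const.mul (h' s)).add (contDiff_const.mul (h' t))).add
    (contDiff_const.mul (h' r))

lemma G_val {s t r σ a b c : ℂ} {x : ℝ} (hs : Complex.exp (s * x) = 1)
    (ht : Complex.exp (t * x) = 1) (hr : Complex.exp (r * x) = 1) :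
    G s t r σ a b c x = (1 + σ) * (a + b + c) := by
  simp only [G, neg_mul, Complex.exp_neg, hs, ht, hr]; simp; ring

lemma deriv_zero_Icc {L : ℝ} (hL : 0 < L) {f f' : ℝ → ℂ} (h : ∀ x, HasDerivAt f (f' x) x)
    (h0 : ∀ x ∈ Icc (0:ℝ) L, f x = 0) : ∀ x ∈ Icc (0:ℝ) L, f' x = 0 := by
  intro x hx
  have h1 := (h x).hasDerivWithinAt (s := Icc 0 L)
  have h2 : HasDerivWithinAt f 0 (Icc 0 L) x :=
    (hasDerivWithinAt_const x (Icc 0 L) (0:ℂ)).congr (fun y hy => h0 y hy) (h0 x hx)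
  exact (uniqueDiffOn_Icc hL x hx).eq_deriv _ h1 h2

lemma backward {L : ℝ} (hL : 0 < L) {s t r : ℂ} (d1 : s ≠ t) (d2 : s ≠ r) (d3 : t ≠ r)
    (e1 : s + t + r = 0) (e2 : s * t + s * r + t * r = 1) (hs : Complex.exp (s * L) = 1)
    (ht : Complex.exp (t * L) = 1) (hr : Complex.exp (r * L) = 1) :
    ∃ (lam : ℂ) (θ u : ℝ → ℂ),
      ContDiff ℝ 3 θ ∧ ContDiff ℝ 3 u ∧
      ¬(∀ x ∈ Icc (0 : ℝ) L, θ x = 0 ∧ u x = 0) ∧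
      (∀ x ∈ Icc (0 : ℝ) L, -deriv u x - deriv (deriv (deriv u)) x = lam * θ x) ∧
      (∀ x ∈ Icc (0 : ℝ) L, -deriv θ x - deriv (deriv (deriv θ)) x = lam * u x) ∧
      θ 0 = 0 ∧ θ L = 0 ∧ deriv θ 0 = 0 ∧ deriv (deriv θ) L = 0 ∧
      u 0 = 0 ∧ u L = 0 ∧ deriv u L = 0 ∧ deriv (deriv θ) 0 = 0 := by
  obtain ⟨a, b, c, k0, k1, k2⟩ : ∃ a b c : ℂ, a + b + c = 0 ∧ a * s + b * t + c * r = 0 ∧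
      a * s * s + b * t * t + c * r * r ≠ 0 := by
    refine ⟨t - r, r - s, s - t, by ring, by ring, ?_⟩
    have : (t - r) * s * s + (r - s) * t * t + (s - t) * r * r
      = (s - t) * (s - r) * (t - r) := by ring
    rw [this]
    exact mul_ne_zero (mul_ne_zero (sub_ne_zero.2 d1) (sub_ne_zero.2 d2)) (sub_ne_zero.2 d3)
  have cs : s ^ 3 + s = s * t * r := by linear_combination s ^ 2 * e1 - s * e2
  have ct : t ^ 3 + t = s * t * r := by linear_combination t ^ 2 * e1 - t * e2
  have cr : r ^ 3 + r = s * t * r := by linear_combination r ^ 2 * e1 - r * e2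
  have z : ∀ w : ℂ, Complex.exp (w * (0:ℝ)) = 1 := by simp
  refine ⟨-(s * t * r), G s t r (-1) a b c, G s t r 1 a b c, G_contDiff .., G_contDiff ..,
    ?_, ?_, ?_, ?_, ?_, ?_, ?_, ?_, ?_, ?_, ?_⟩
  · intro h
    have h1 := deriv_zero_Icc hL (G_deriv s t r 1 a b c) (fun x hx => (h x hx).2)
    have h2 := deriv_zero_Icc hL (G_deriv s t r (-1) _ _ _) h1 0 ⟨le_rfl, hL.le⟩
    rw [G_val (z s) (z t) (z r)] at h2
    apply k2
    linear_combination h2 / 2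
  · intro x _
    simp only [G_deriv_eq, neg_neg]
    simp only [G]
    linear_combination -a * (Complex.exp (s * x) - Complex.exp (-s * x)) * cs
      - b * (Complex.exp (t * x) - Complex.exp (-t * x)) * ct
      - c * (Complex.exp (r * x) - Complex.exp (-r * x)) * cr
  · intro x _
    simp only [G_deriv_eq, neg_neg]
    simp only [G]
    linear_combination -a * (Complex.exp (s * x) + Complex.exp (-s * x)) * cs
      - b * (Complex.exp (t * x) + Complex.exp (-t * x)) * ct
      - c * (Complex.exp (r * x) + Complex.exp (-r * x)) * cr
  · rw [G_val (z s) (z t) (z r)]; ring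
  · rw [G_val hs ht hr]; ring
  · rw [G_deriv_eq, G_val (z s) (z t) (z r), k1, mul_zero]
  · rw [G_deriv_eq, G_deriv_eq, G_val hs ht hr]; ring
  · rw [G_val (z s) (z t) (z r), k0, mul_zero]
  · rw [G_val hs ht hr, k0, mul_zero]
  · rw [G_deriv_eq, G_val hs ht hr, k1, mul_zero]
  · rw [G_deriv_eq, G_deriv_eq, G_val (z s) (z t) (z r)]; ring

end Bsq

theorem statement_8 (L : ℝ) (hL : 0 < L) :
    (∃ (lam : ℂ) (θ u : ℝ → ℂ),
      ContDiff ℝ 3 θ ∧ ContDiff ℝ 3 u ∧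
      ¬(∀ x ∈ Icc (0 : ℝ) L, θ x = 0 ∧ u x = 0) ∧
      (∀ x ∈ Icc (0 : ℝ) L, -deriv u x - deriv (deriv (deriv u)) x = lam * θ x) ∧
      (∀ x ∈ Icc (0 : ℝ) L, -deriv θ x - deriv (deriv (deriv θ)) x = lam * u x) ∧
      θ 0 = 0 ∧ θ L = 0 ∧ deriv θ 0 = 0 ∧ deriv (deriv θ) L = 0 ∧
      u 0 = 0 ∧ u L = 0 ∧ deriv u L = 0 ∧ deriv (deriv θ) 0 = 0) ↔ L ∈ criticalN3 := by
  constructor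
  · rintro ⟨lam, θ, u, hθ, hu, hne, o1, o2, b1, b2, b3, b4, b5, b6, b7, b8⟩
    exact Bsq.forward hL hθ hu hne o1 o2 b1 b2 b3 b4 b5 b6 b7 b8
  · rintro ⟨k, l, hk, hl, ⟨m, hm⟩, hx⟩
    have hLc : (L:ℂ) ≠ 0 := by exact_mod_cast hL.ne'
    have hsq : L ^ 2 = 4 * Real.pi ^ 2 / 3 * ((k : ℝ)^2 + (k : ℝ) * (l : ℝ) + (l : ℝ)^2) := by
      rw [hx, mul_pow, div_pow, Real.sq_sqrt (by norm_num), Real.sq_sqrt (by positivity)]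
      ring
    have hsqc : (L:ℂ) ^ 2 = 4 * Real.pi ^ 2 / 3 * ((k : ℂ)^2 + (k : ℂ) * (l : ℂ) + (l : ℂ)^2) := by
      exact_mod_cast hsq
    have hm' : (l : ℂ) = 3 * m - 2 * k := by
      have : (2 * k + l : ℂ) = 3 * m := by exact_mod_cast hm
      linear_combination this
    have hexp : ∀ n : ℤ, Complex.exp ((n * (2 * Real.pi * Complex.I) / L) * L) = 1 := by
      intro n
      rw [div_mul_cancel₀ _ hLc, Complex.exp_int_mul_two_pi_mul_I]
    have hinj : ∀ n p : ℤ, n ≠ p → (n * (2 * Real.pi * Complex.I) / L : ℂ)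
        ≠ p * (2 * Real.pi * Complex.I) / L := by
      intro n p hnp h
      apply hnp
      have h1 := (div_left_inj' hLc).1 h
      exact_mod_cast mul_right_cancel₀ Complex.two_pi_I_ne_zero h1
    refine Bsq.backward hL (hinj m (m - k) (by omega)) (hinj m (m - k - l) (by omega))
      (hinj (m - k) (m - k - l) (by omega)) ?_ ?_ (hexp _) (hexp _) (hexp _)
    · push_cast
      rw [hm']
      ring
    · have hI := Complex.I_sq
      push_cast
      rw [hm'] at hsqc ⊢
      field_simp
      rw [hsqc, hI]
      ring
end

section
/- Let L > 0. Then L ∈ 𝒩 if and only if there exist p ∈ ℂ and (α, β) ∈ ℂ² with (α, β) ≠ (0, 0) such that the function ξ ↦ (α − β·e^{−iLξ})/(ξ³ − ξ + p) is entire; that is, there exists an entire function F : ℂ → ℂ with F(ξ)·(ξ³ − ξ + p) = α − β·e^{−iLξ} for all ξ ∈ ℂ. -/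
lemma aux_div (f : ℂ → ℂ) (hf : Differentiable ℂ f) (a : ℂ) (ha : f a = 0) :
    ∃ g : ℂ → ℂ, Differentiable ℂ g ∧ ∀ z, f z = (z - a) * g z := by
  refine ⟨dslope f a, ?_, fun z => ?_⟩
  · have := (Complex.differentiableOn_dslope (f := f) (c := a) (s := Set.univ) Filter.univ_mem).2
      hf.differentiableOn
    exact differentiableOn_univ.1 this
  · have := sub_smul_dslope f a z
    rw [ha, sub_zero, smul_eq_mul] at this
    exact this.symm

lemma aux_double (L : ℝ) (hL : 0 < L) (α β a c : ℂ) (hβ : β ≠ 0) (F : ℂ → ℂ)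
    (hF : Differentiable ℂ F)
    (h : ∀ ξ : ℂ, F ξ * ((ξ - a) * (ξ - a) * (ξ - c))
      = α - β * Complex.exp (-(Complex.I * (L : ℂ) * ξ))) : False := by
  have hL' : (L : ℂ) ≠ 0 := by exact_mod_cast hL.ne'
  have h1 : HasDerivAt (fun ξ : ℂ => α - β * Complex.exp (-(Complex.I * (L : ℂ) * ξ)))
      (- (β * (Complex.exp (-(Complex.I * (L : ℂ) * a)) * (-(Complex.I * (L : ℂ) * 1))))) a :=
    ((((hasDerivAt_id a).const_mul (Complex.I * (L : ℂ))).neg.cexp).const_mul β).const_sub α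
  have ha : HasDerivAt (fun ξ : ℂ => ξ - a) 1 a := (hasDerivAt_id a).sub_const a
  have hc : HasDerivAt (fun ξ : ℂ => ξ - c) 1 a := (hasDerivAt_id a).sub_const c
  have h2 := (hF a).hasDerivAt.mul ((ha.mul ha).mul hc)
  have h3 : (F * (((fun ξ : ℂ => ξ - a) * (fun ξ : ℂ => ξ - a)) * (fun ξ : ℂ => ξ - c)))
      = (fun ξ : ℂ => α - β * Complex.exp (-(Complex.I * (L : ℂ) * ξ))) := by
    funext ξ; simpa using h ξ
  rw [h3] at h2
  have h4 := h1.unique h2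
  simp [hβ, hL', Complex.exp_ne_zero] at h4

lemma aux_int (m n : ℤ) (hm : m ≠ 0) (hn : n ≠ 0) (hmn : m + n ≠ 0) :
    ∃ k l : ℕ, 0 < k ∧ 0 < l ∧ (k:ℤ)^2 + k*l + (l:ℤ)^2 = m^2 + m*n + n^2 := by
  have key : ∀ x y : ℤ, 0 < x → 0 < y → x^2+x*y+y^2 = m^2+m*n+n^2 →
      ∃ k l : ℕ, 0 < k ∧ 0 < l ∧ (k:ℤ)^2 + k*l + (l:ℤ)^2 = m^2 + m*n + n^2 := by
    intro x y hx hy h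
    refine ⟨x.toNat, y.toNat, by omega, by omega, ?_⟩
    rw [Int.toNat_of_nonneg hx.le, Int.toNat_of_nonneg hy.le, h]
  rcases lt_or_gt_of_ne hm with h1 | h1 <;> rcases lt_or_gt_of_ne hn with h2 | h2 <;>
    rcases lt_or_gt_of_ne hmn with h3 | h3
  · exact key (-m) (-n) (by omega) (by omega) (by ring)
  · omega
  · exact key n (-(m+n)) (by omega) (by omega) (by ring)
  · exact key (-m) (m+n) (by omega) (by omega) (by ring)
  · exact key m (-(m+n)) (by omega) (by omega) (by ring)
  · exact key (-n) (m+n) (by omega) (by omega) (by ring)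
  · omega
  · exact key m n (by omega) (by omega) (by ring)

lemma aux_roots (p : ℂ) : ∃ a b c : ℂ, a + b + c = 0 ∧ a*b + b*c + a*c = -1 ∧
    ∀ ξ : ℂ, ξ^3 - ξ + p = (ξ - a) * (ξ - b) * (ξ - c) := by
  obtain ⟨a, ha⟩ : ∃ a : ℂ, a^3 - a + p = 0 := by
    have hd : (Polynomial.X^3 - Polynomial.X + Polynomial.C p : Polynomial ℂ).degree = 3 := by
      compute_degree!
    obtain ⟨a, ha⟩ := IsAlgClosed.exists_root
      (Polynomial.X^3 - Polynomial.X + Polynomial.C p : Polynomial ℂ) (by rw [hd]; norm_num)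
    exact ⟨a, by simpa [Polynomial.IsRoot] using ha⟩
  obtain ⟨s, hs⟩ := IsAlgClosed.exists_pow_nat_eq (4 - 3 * a^2) (n := 2) (by norm_num)
  refine ⟨a, (-a + s)/2, (-a - s)/2, by ring, ?_, fun ξ => ?_⟩
  · linear_combination (-1/4) * hs
  · linear_combination ha + (ξ - a)/4 * hs

/-- `L ∈ 𝒩` iff there are `p ∈ ℂ` and `(α, β) ≠ (0,0)` such that
`ξ ↦ (α − β e^{−iLξ})/(ξ³ − ξ + p)` is entire, i.e. there is an entire `F` with
`F(ξ)·(ξ³ − ξ + p) = α − β e^{−iLξ}` for all `ξ`. -/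
theorem statement_11 (L : ℝ) (hL : 0 < L) :
    L ∈ criticalN ↔
      ∃ (p α β : ℂ), (α, β) ≠ (0, 0) ∧
        ∃ F : ℂ → ℂ, Differentiable ℂ F ∧
          ∀ ξ : ℂ, F ξ * (ξ^3 - ξ + p) = α - β * Complex.exp (-(Complex.I * (L : ℂ) * ξ)) := by
  have hL' : (L : ℂ) ≠ 0 := by exact_mod_cast hL.ne'
  have hpi : (Real.pi : ℂ) ≠ 0 := by exact_mod_cast Real.pi_ne_zero
  have hI := Complex.I_ne_zero
  have hI2 := Complex.I_sq
  constructor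
  · rintro ⟨k, l, hk, hl, hLk⟩
    have hsq : 3 * L^2 = 4 * Real.pi^2 * ((k:ℝ)^2 + k*l + (l:ℝ)^2) := by
      rw [hLk, mul_pow, div_pow, Real.sq_sqrt (by positivity), Real.sq_sqrt (by positivity)]
      ring
    have hsqC : 3 * (L:ℂ)^2 = 4 * (Real.pi:ℂ)^2 * ((k:ℂ)^2 + k*l + (l:ℂ)^2) := by
      exact_mod_cast hsq
    obtain ⟨d, hd⟩ : ∃ d : ℂ, d = 2 * Real.pi / L := ⟨_, rfl⟩
    have hd0 : d ≠ 0 := by rw [hd]; exact div_ne_zero (mul_ne_zero two_ne_zero hpi) hL'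
    have hdL : d * L = 2 * Real.pi := by rw [hd]; field_simp
    have hd2 : d^2 * ((k:ℂ)^2 + k*l + (l:ℂ)^2) = 3 := by
      rw [hd]; field_simp; linear_combination -hsqC
    obtain ⟨a, ha⟩ : ∃ a : ℂ, a = d * (2*k+l)/3 := ⟨_, rfl⟩
    have hkC : (k:ℂ) ≠ 0 := by exact_mod_cast hk.ne'
    have hlC : (l:ℂ) ≠ 0 := by exact_mod_cast hl.ne'
    have hklC : (k:ℂ) + l ≠ 0 := by exact_mod_cast (by omega : k + l ≠ 0)
    let f : ℂ → ℂ := fun ξ => Complex.exp (-(Complex.I * (L : ℂ) * a))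
      - 1 * Complex.exp (-(Complex.I * (L : ℂ) * ξ))
    have hf : Differentiable ℂ f := by fun_prop
    have hper : ∀ n : ℕ, f (a - d * n) = 0 := by
      intro n
      simp only [f, one_mul, sub_eq_zero]
      rw [Complex.exp_eq_exp_iff_exists_int]
      refine ⟨-n, ?_⟩
      push_cast
      linear_combination (-Complex.I * n) * hdL
    obtain ⟨g, hg, hfg⟩ := aux_div f hf a (by simpa using hper 0)
    have hg0 : g (a - d * k) = 0 := by
      have := hper k
      rw [hfg] at this
      simpa [hd0, hkC] using this
    obtain ⟨g2, hg2, hfg2⟩ := aux_div g hg _ hg0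
    have hg20 : g2 (a - d * (k + l)) = 0 := by
      have := hper (k + l)
      rw [hfg, hfg2] at this
      push_cast at this
      have e1 : a - d * ((k:ℂ) + l) - a = -(d * (k + l)) := by ring
      have e2 : a - d * ((k:ℂ) + l) - (a - d * k) = -(d * l) := by ring
      rw [e1, e2] at this
      simpa [hd0, hlC, hklC] using this
    obtain ⟨g3, hg3, hfg3⟩ := aux_div g2 hg2 _ hg20
    refine ⟨-(a * (a - d * k) * (a - d * (k+l))), Complex.exp (-(Complex.I * (L : ℂ) * a)), 1,
      by simp, g3, hg3, fun ξ => ?_⟩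
    change _ = f ξ
    rw [hfg, hfg2, hfg3, ha]
    linear_combination (g3 ξ * ξ / 3) * hd2
  · rintro ⟨p, α, β, hαβ, F, hF, h⟩
    obtain ⟨a, b, c, h1, h2, h3⟩ := aux_roots p
    simp only [h3] at h
    have ea := h a
    have eb := h b
    have ec := h c
    simp only [sub_self, zero_mul, mul_zero] at ea eb ec
    have hβ : β ≠ 0 := by
      rintro rfl
      apply hαβ
      simp at ea
      simp [ea]
    have hab : a ≠ b := by
      rintro rfl
      exact aux_double L hL α β a c hβ F hF h
    have hac : a ≠ c := by
      rintro rfl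
      exact aux_double L hL α β a b hβ F hF (fun ξ => by rw [← h ξ]; ring)
    have hbc : b ≠ c := by
      rintro rfl
      exact aux_double L hL α β b a hβ F hF (fun ξ => by rw [← h ξ]; ring)
    have hper : ∀ x y : ℂ, 0 = α - β * Complex.exp (-(Complex.I * (L : ℂ) * x)) →
        0 = α - β * Complex.exp (-(Complex.I * (L : ℂ) * y)) →
        ∃ n : ℤ, L * (y - x) = 2 * Real.pi * n := by
      intro x y hx hy
      have : Complex.exp (-(Complex.I * (L : ℂ) * x)) = Complex.exp (-(Complex.I * (L : ℂ) * y)) :=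
        mul_left_cancel₀ hβ (by linear_combination hx - hy)
      obtain ⟨n, hn⟩ := Complex.exp_eq_exp_iff_exists_int.1 this
      refine ⟨n, mul_left_cancel₀ hI ?_⟩
      linear_combination hn
    obtain ⟨m, hm⟩ := hper b a eb ea
    obtain ⟨n, hn⟩ := hper c b ec eb
    have hm0 : m ≠ 0 := by
      rintro rfl
      simp [hL', sub_eq_zero, hab] at hm
    have hn0 : n ≠ 0 := by
      rintro rfl
      simp [hL', sub_eq_zero, hbc] at hn
    have hmn0 : m + n ≠ 0 := by
      intro h0
      have h0' : (m:ℂ) + n = 0 := by exact_mod_cast h0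
      have : L * (a - c) = 0 := by linear_combination hm + hn + 2 * Real.pi * h0'
      simp [hL', sub_eq_zero, hac] at this
    obtain ⟨k, l, hk, hl, hkl⟩ := aux_int m n hm0 hn0 hmn0
    have hklC : (k:ℂ)^2 + k*l + (l:ℂ)^2 = (m:ℂ)^2 + m*n + (n:ℂ)^2 := by exact_mod_cast hkl
    have hc' : c = -a - b := by linear_combination h1
    have hsqC : 3 * (L:ℂ)^2 = 4 * (Real.pi:ℂ)^2 * ((k:ℂ)^2 + k*l + (l:ℂ)^2) := by
      have e : 4 * (Real.pi:ℂ)^2 * ((m:ℂ)^2 + m*n + (n:ℂ)^2) =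
          (2 * Real.pi * m)^2 + (2 * Real.pi * m) * (2 * Real.pi * n) + (2 * Real.pi * n)^2 := by
        ring
      rw [hklC, e, ← hm, ← hn]
      subst hc'
      linear_combination (3 * (L:ℂ)^2) * h2
    have hsq : 3 * L^2 = 4 * Real.pi^2 * ((k:ℝ)^2 + k*l + (l:ℝ)^2) := by
      exact_mod_cast hsqC
    refine ⟨k, l, hk, hl, ?_⟩
    have hpos := Real.pi_pos
    rw [← sq_eq_sq₀ hL.le (by positivity), mul_pow, div_pow, Real.sq_sqrt (by positivity),
      Real.sq_sqrt (by positivity)]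
    linear_combination hsq / 3
end

section
/- Let L > 0. There exist λ ∈ ℂ and three times continuously differentiable functions θ, u : [0,L] → ℂ, not both identically zero, satisfying −u′(x) − u‴(x) = λ·θ(x) and −θ′(x) − θ‴(x) = λ·u(x) for all x ∈ [0,L], with boundary conditions θ(0) = θ(L) = θ′(0) = θ″(L) = 0 and u(0) = u(L) = u′(L) = 0, if and only if there exist p ∈ ℂ and (α, α′, β, γ, γ′) ∈ ℂ⁵ with (α, α′, β, γ, γ′) ≠ (0,0,0,0,0) and entire functions F, G : ℂ → ℂ such that F(ξ)·(ξ³ − ξ + p) = α + iβξ + γ·e^{−iLξ} + iγ′ξ·e^{−iLξ} and G(ξ)·(ξ³ − ξ + p) = α′ − iβξ + γ·e^{iLξ} + iγ′ξ·e^{iLξ} for all ξ ∈ ℂ. -/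
open Set

/-- The companion matrix of the third order equation, as a continuous linear map. -/
noncomputable def compA (c : ℂ) : (ℂ × ℂ × ℂ) →L[ℝ] (ℂ × ℂ × ℂ) :=
  ((ContinuousLinearMap.fst ℝ ℂ ℂ).comp (ContinuousLinearMap.snd ℝ ℂ (ℂ × ℂ))).prod
    (((ContinuousLinearMap.snd ℝ ℂ ℂ).comp (ContinuousLinearMap.snd ℝ ℂ (ℂ × ℂ))).prod
      ((-c) • (ContinuousLinearMap.fst ℝ ℂ (ℂ × ℂ))
        - (ContinuousLinearMap.fst ℝ ℂ ℂ).comp (ContinuousLinearMap.snd ℝ ℂ (ℂ × ℂ))))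

lemma compA_apply (c : ℂ) (y : ℂ × ℂ × ℂ) :
    compA c y = (y.2.1, y.2.2, -c * y.1 - y.2.1) := by
  simp [compA]

lemma ode_exists (L : ℝ) (c b d : ℂ) : ∃ v : ℝ → ℂ, ContDiff ℝ 3 v ∧
    (∀ x, -deriv v x - deriv (deriv (deriv v)) x = c * v x) ∧
    v L = 0 ∧ deriv v L = b ∧ deriv (deriv v) L = d := by
  set y : ℝ → ℂ × ℂ × ℂ := fun x => NormedSpace.exp ((x - L) • compA c) ((0 : ℂ), b, d) with hy
  have hyd : ∀ x, HasDerivAt y (compA c (y x)) x := by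
    intro x
    have h1 := (hasDerivAt_exp_smul_const' (𝕂 := ℝ) (compA c) (x - L)).comp_sub_const x L
    have h2 := h1.clm_apply (hasDerivAt_const x ((0 : ℂ), b, d))
    simpa [hy] using h2
  have hyL : y L = ((0 : ℂ), b, d) := by
    have : (L - L) • compA c = 0 := by rw [sub_self]; exact zero_smul ℝ (compA c)
    simp only [hy, this, NormedSpace.exp_zero]
    rfl
  have e1 : ∀ x, HasDerivAt (fun x => (y x).1) (y x).2.1 x := by
    intro x
    have := (ContinuousLinearMap.fst ℝ ℂ (ℂ × ℂ)).hasFDerivAt.comp_hasDerivAt x (hyd x)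
    simpa [compA_apply, Function.comp_def] using this
  have e2 : ∀ x, HasDerivAt (fun x => (y x).2.1) (y x).2.2 x := by
    intro x
    have := ((ContinuousLinearMap.fst ℝ ℂ ℂ).comp
      (ContinuousLinearMap.snd ℝ ℂ (ℂ × ℂ))).hasFDerivAt.comp_hasDerivAt x (hyd x)
    simpa [compA_apply, Function.comp_def] using this
  have e3 : ∀ x, HasDerivAt (fun x => (y x).2.2) (-c * (y x).1 - (y x).2.1) x := by
    intro x
    have := ((ContinuousLinearMap.snd ℝ ℂ ℂ).comp
      (ContinuousLinearMap.snd ℝ ℂ (ℂ × ℂ))).hasFDerivAt.comp_hasDerivAt x (hyd x)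
    simpa [compA_apply, Function.comp_def] using this
  have d1 : deriv (fun x => (y x).1) = fun x => (y x).2.1 := funext fun x => (e1 x).deriv
  have d2 : deriv (fun x => (y x).2.1) = fun x => (y x).2.2 := funext fun x => (e2 x).deriv
  have d3 : deriv (fun x => (y x).2.2) = fun x => (-c * (y x).1 - (y x).2.1) :=
    funext fun x => (e3 x).deriv
  have D1 : Differentiable ℝ (fun x => (y x).1) := fun x => (e1 x).differentiableAt
  have D2 : Differentiable ℝ (fun x => (y x).2.1) := fun x => (e2 x).differentiableAt
  have D3 : Differentiable ℝ (fun x => (y x).2.2) := fun x => (e3 x).differentiableAt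
  refine ⟨fun x => (y x).1, ?_, ?_, ?_, ?_, ?_⟩
  · rw [show (3 : WithTop ℕ∞) = 2 + 1 by norm_num, contDiff_succ_iff_deriv]
    refine ⟨D1, by simp, ?_⟩
    rw [d1, show (2 : WithTop ℕ∞) = 1 + 1 by norm_num, contDiff_succ_iff_deriv]
    refine ⟨D2, by simp, ?_⟩
    rw [d2, contDiff_one_iff_deriv]
    refine ⟨D3, ?_⟩
    rw [d3]
    exact (continuous_const.mul D1.continuous).sub D2.continuous
  · intro x
    rw [d1, d2, d3]; ring
  · simp [hyL]
  · rw [d1]; simp [hyL]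
  · rw [d1, d2]; simp [hyL]

lemma cd3 {v : ℝ → ℂ} (hv : ContDiff ℝ 3 v) :
    (∀ x, HasDerivAt v (deriv v x) x) ∧ (∀ x, HasDerivAt (deriv v) (deriv (deriv v) x) x) ∧
    (∀ x, HasDerivAt (deriv (deriv v)) (deriv (deriv (deriv v)) x) x) := by
  rw [show (3 : WithTop ℕ∞) = 2 + 1 by norm_num, contDiff_succ_iff_deriv] at hv
  obtain ⟨h1, -, hv⟩ := hv
  rw [show (2 : WithTop ℕ∞) = 1 + 1 by norm_num, contDiff_succ_iff_deriv] at hv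
  obtain ⟨h2, -, hv⟩ := hv
  rw [contDiff_one_iff_deriv] at hv
  exact ⟨fun x => (h1 x).hasDerivAt, fun x => (h2 x).hasDerivAt, fun x => (hv.1 x).hasDerivAt⟩

lemma ode_unique (L : ℝ) (c : ℂ) (v : ℝ → ℂ) (hv : ContDiff ℝ 3 v)
    (h : ∀ x ∈ Icc (0 : ℝ) L, -deriv v x - deriv (deriv (deriv v)) x = c * v x)
    (h0 : v L = 0) (h1 : deriv v L = 0) (h2 : deriv (deriv v) L = 0) :
    ∀ x ∈ Icc (0 : ℝ) L, v x = 0 := by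
  obtain ⟨e1, e2, e3⟩ := cd3 hv
  have hD : ∀ x, HasDerivAt (fun x => (v x, deriv v x, deriv (deriv v) x))
      (deriv v x, deriv (deriv v) x, deriv (deriv (deriv v)) x) x :=
    fun x => (e1 x).prodMk ((e2 x).prodMk (e3 x))
  have key : EqOn (fun x => (v x, deriv v x, deriv (deriv v) x)) (fun _ => (0 : ℂ × ℂ × ℂ))
      (Icc 0 L) := by
    refine ODE_solution_unique_of_mem_Icc_left (v := fun _ => compA c) (s := fun _ => univ)
      (K := ‖compA c‖₊) ?_ ?_ ?_ ?_ ?_ ?_ ?_ ?_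
    · intro t _; exact (compA c).lipschitz.lipschitzOnWith
    · exact fun x _ => (hD x).continuousAt.continuousWithinAt
    · intro t ht
      have := (hD t).hasDerivWithinAt (s := Iic t)
      convert this using 1
      rw [compA_apply]
      have := h t ⟨ht.1.le, ht.2⟩
      ext1
      · rfl
      · ext1
        · rfl
        · simp only; linear_combination this
    · intros; trivial
    · exact continuousOn_const
    · intro t ht
      simpa using hasDerivWithinAt_const t (Iic t) (0 : ℂ × ℂ × ℂ)
    · intros; trivial
    · simp [h0, h1, h2]
  intro x hx
  exact congrArg Prod.fst (key hx)

/-- Fourier transform of the restriction to `[0,L]`. -/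
noncomputable def FT (L : ℝ) (v : ℝ → ℂ) (ξ : ℂ) : ℂ :=
  ∫ x in (0 : ℝ)..L, v x * Complex.exp (-(Complex.I * (x : ℂ) * ξ))

lemma FT_diff (L : ℝ) (v : ℝ → ℂ) (hv : Continuous v) : Differentiable ℂ (FT L v) := by
  intro ξ₀
  let F' : ℂ → ℝ → ℂ := fun ξ x =>
    v x * (Complex.exp (-(Complex.I * (x : ℂ) * ξ)) * (-(Complex.I * (x : ℂ))))
  have hc : Continuous (fun q : ℂ × ℝ => F' q.1 q.2) := by
    simp only [F']; fun_prop
  obtain ⟨M, hM⟩ := ((isCompact_closedBall ξ₀ 1).prod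
    (isCompact_uIcc (a := (0 : ℝ)) (b := L))).exists_bound_of_continuousOn hc.continuousOn
  have := intervalIntegral.hasDerivAt_integral_of_dominated_loc_of_deriv_le
    (μ := MeasureTheory.volume) (a := 0) (b := L)
    (F := fun (ξ : ℂ) (x : ℝ) => v x * Complex.exp (-(Complex.I * (x : ℂ) * ξ)))
    (F' := F') (x₀ := ξ₀) (s := Metric.closedBall ξ₀ 1) (bound := fun _ => M)
    (Metric.closedBall_mem_nhds _ one_pos) ?_ ?_ ?_ ?_ ?_ ?_
  · exact this.2.differentiableAt
  · refine Filter.Eventually.of_forall fun ξ => Continuous.aestronglyMeasurable ?_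
    fun_prop
  · apply Continuous.intervalIntegrable
    fun_prop
  · apply Continuous.aestronglyMeasurable
    simp only [F']; fun_prop
  · refine Filter.Eventually.of_forall fun t ht ξ hξ => ?_
    exact hM (ξ, t) ⟨hξ, uIoc_subset_uIcc ht⟩
  · simp
  · refine Filter.Eventually.of_forall fun t ht ξ hξ => ?_
    have h1 : HasDerivAt (fun ξ : ℂ => -(Complex.I * (t : ℂ) * ξ)) (-(Complex.I * (t : ℂ))) ξ := by
      simpa using ((hasDerivAt_id ξ).const_mul (Complex.I * (t : ℂ))).fun_neg
    exact h1.cexp.const_mul (v t)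

lemma FT_eq (L : ℝ) (hL : 0 < L) (c : ℂ) (v : ℝ → ℂ) (hv : ContDiff ℝ 3 v)
    (h : ∀ x ∈ Icc (0 : ℝ) L, -deriv v x - deriv (deriv (deriv v)) x = c * v x) (ξ : ℂ) :
    FT L v ξ * (ξ^3 - ξ + Complex.I * c) =
      Complex.I * (deriv (deriv v) 0 + Complex.I * ξ * deriv v 0 + (1 - ξ^2) * v 0)
      - Complex.I * Complex.exp (-(Complex.I * (L : ℂ) * ξ)) *
        (deriv (deriv v) L + Complex.I * ξ * deriv v L + (1 - ξ^2) * v L) := by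
  obtain ⟨e1, e2, e3⟩ := cd3 hv
  have hE : ∀ x : ℝ, HasDerivAt (fun x : ℝ => Complex.exp (-(Complex.I * (x : ℂ) * ξ)))
      (Complex.exp (-(Complex.I * (x : ℂ) * ξ)) * (-(Complex.I * ξ))) x := by
    intro x
    have h1 : HasDerivAt (fun x : ℝ => -(Complex.I * (x : ℂ) * ξ)) (-(Complex.I * ξ)) x := by
      have := ((Complex.ofRealCLM.hasDerivAt (x := x)).const_mul Complex.I).mul_const ξ
      simpa using this.fun_neg
    exact h1.cexp
  have hH := intervalIntegral.integral_eq_sub_of_hasDerivAt (a := 0) (b := L)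
    (f := fun x : ℝ => -Complex.I * (Complex.exp (-(Complex.I * (x : ℂ) * ξ)) *
      (deriv (deriv v) x + Complex.I * ξ * deriv v x + (1 - ξ^2) * v x)))
    (f' := fun x : ℝ => v x * Complex.exp (-(Complex.I * (x : ℂ) * ξ)) *
      (ξ^3 - ξ + Complex.I * c)) ?_ ?_
  · rw [intervalIntegral.integral_mul_const] at hH
    rw [FT, hH]
    simp
    ring
  · intro x hx
    rw [uIcc_of_le hL.le] at hx
    have h1 := ((hE x).fun_mul (((e3 x).fun_add ((e2 x).const_mul (Complex.I * ξ))).fun_add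
      ((e1 x).const_mul (1 - ξ^2)))).const_mul (-Complex.I)
    refine h1.congr_deriv ?_
    have h2 := h x hx
    have h3 := Complex.I_sq
    have h4 : deriv (deriv (deriv v)) x = - deriv v x - c * v x := by linear_combination -h2
    rw [h4]
    linear_combination (Complex.exp (-(Complex.I * (x : ℂ) * ξ)) * (v x * (ξ - ξ^3)
      + Complex.I * ξ^2 * deriv v x)) * h3
  · apply Continuous.intervalIntegrable
    have := hv.continuous
    fun_prop

lemma entire_quot (p a b c : ℂ) (D : ℂ → ℂ) (hD : Differentiable ℂ D)
    (h : ∀ ξ, D ξ * (ξ^3 - ξ + p) = a + b * ξ + c * ξ^2) : a = 0 ∧ b = 0 ∧ c = 0 := by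
  have hi : Filter.Tendsto (fun z : ℂ => z⁻¹) (Bornology.cobounded ℂ) (nhds 0) :=
    Filter.tendsto_inv₀_cobounded
  have hden : Filter.Tendsto (fun z : ℂ => 1 - (z⁻¹)^2 + p * (z⁻¹)^3)
      (Bornology.cobounded ℂ) (nhds 1) := by
    simpa using ((tendsto_const_nhds (x := (1 : ℂ))).sub (hi.pow 2)).add ((hi.pow 3).const_mul p)
  have hnum : Filter.Tendsto (fun z : ℂ => a * (z⁻¹)^3 + b * (z⁻¹)^2 + c * z⁻¹)
      (Bornology.cobounded ℂ) (nhds 0) := by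
    simpa using (((hi.pow 3).const_mul a).add ((hi.pow 2).const_mul b)).add (hi.const_mul c)
  have hq := hnum.div hden one_ne_zero
  have hz : ∀ᶠ z : ℂ in Bornology.cobounded ℂ, z ≠ 0 := by
    filter_upwards [Bornology.isBounded_singleton (x := (0 : ℂ))] with z hz using hz
  have hne := hden.eventually_ne one_ne_zero
  have hlim : Filter.Tendsto D (Filter.cocompact ℂ) (nhds 0) := by
    rw [← Metric.cobounded_eq_cocompact]
    rw [zero_div] at hq
    refine hq.congr' ?_
    filter_upwards [hz, hne] with z hz hne
    simp only [Pi.div_apply]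
    rw [div_eq_iff hne]
    have := h z
    field_simp
    linear_combination -this
  have h0 : ∀ z, D z = 0 := fun z => hD.apply_eq_of_tendsto_cocompact z hlim
  have q0 := h 0
  have q1 := h 1
  have q2 := h (-1)
  simp only [h0] at q0 q1 q2
  refine ⟨by linear_combination -q0, by linear_combination (q2 - q1)/2, 
    by linear_combination q0 - (q1 + q2)/2⟩

lemma lin_comb {f g : ℝ → ℂ} (hf : ContDiff ℝ 3 f) (hg : ContDiff ℝ 3 g) (a b : ℂ) :
    ContDiff ℝ 3 (fun x => a * f x + b * g x) ∧
    (∀ x, deriv (fun x => a * f x + b * g x) x = a * deriv f x + b * deriv g x) ∧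
    (∀ x, deriv (deriv (fun x => a * f x + b * g x)) x
      = a * deriv (deriv f) x + b * deriv (deriv g) x) ∧
    (∀ x, deriv (deriv (deriv (fun x => a * f x + b * g x))) x
      = a * deriv (deriv (deriv f)) x + b * deriv (deriv (deriv g)) x) := by
  obtain ⟨f1, f2, f3⟩ := cd3 hf
  obtain ⟨g1, g2, g3⟩ := cd3 hg
  have d1 : deriv (fun x => a * f x + b * g x) = fun x => a * deriv f x + b * deriv g x :=
    funext fun x => (((f1 x).const_mul a).fun_add ((g1 x).const_mul b)).deriv
  have d2 : deriv (fun x => a * deriv f x + b * deriv g x)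
      = fun x => a * deriv (deriv f) x + b * deriv (deriv g) x :=
    funext fun x => (((f2 x).const_mul a).fun_add ((g2 x).const_mul b)).deriv
  have d3 : deriv (fun x => a * deriv (deriv f) x + b * deriv (deriv g) x)
      = fun x => a * deriv (deriv (deriv f)) x + b * deriv (deriv (deriv g)) x :=
    funext fun x => (((f3 x).const_mul a).fun_add ((g3 x).const_mul b)).deriv
  refine ⟨(contDiff_const.mul hf).add (contDiff_const.mul hg), ?_, ?_, ?_⟩
  · intro x; rw [d1]
  · intro x; rw [d1, d2]
  · intro x; rw [d1, d2, d3]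

lemma zero_deriv_step (L : ℝ) (hL : 0 < L) (v : ℝ → ℂ) (hv : Differentiable ℝ v)
    (h : ∀ x ∈ Icc (0 : ℝ) L, v x = 0) : ∀ x ∈ Icc (0 : ℝ) L, deriv v x = 0 := by
  intro x hx
  have hu : UniqueDiffWithinAt ℝ (Icc (0 : ℝ) L) x := uniqueDiffOn_Icc hL x hx
  have h1 : HasDerivWithinAt v (deriv v x) (Icc (0 : ℝ) L) x :=
    (hv x).hasDerivAt.hasDerivWithinAt
  have h2 : HasDerivWithinAt v 0 (Icc (0 : ℝ) L) x :=
    (hasDerivWithinAt_const x (Icc (0 : ℝ) L) (0 : ℂ)).congr h (h x hx)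
  exact hu.eq_deriv _ h1 h2

lemma zero_derivs (L : ℝ) (hL : 0 < L) (v : ℝ → ℂ) (hv : ContDiff ℝ 3 v)
    (h : ∀ x ∈ Icc (0 : ℝ) L, v x = 0) :
    deriv v 0 = 0 ∧ deriv (deriv v) 0 = 0 ∧ deriv v L = 0 ∧ deriv (deriv v) L = 0 := by
  obtain ⟨e1, e2, e3⟩ := cd3 hv
  have h1 := zero_deriv_step L hL v (fun x => (e1 x).differentiableAt) h
  have h2 := zero_deriv_step L hL _ (fun x => (e2 x).differentiableAt) h1
  have m0 : (0 : ℝ) ∈ Icc (0 : ℝ) L := ⟨le_rfl, hL.le⟩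
  have mL : L ∈ Icc (0 : ℝ) L := ⟨hL.le, le_rfl⟩
  exact ⟨h1 0 m0, h2 0 m0, h1 L mL, h2 L mL⟩

/-- The spectral problem with boundary conditions `θ(0)=θ(L)=θ′(0)=θ″(L)=0`,
`u(0)=u(L)=u′(L)=0` has a nontrivial solution iff there are `p` and
`(α, α′, β, γ, γ′) ≠ 0` such that both
`(α + iβξ + γe^{−iLξ} + iγ′ξe^{−iLξ})/(ξ³−ξ+p)` and
`(α′ − iβξ + γe^{iLξ} + iγ′ξe^{iLξ})/(ξ³−ξ+p)` are entire functions. -/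
theorem statement_12 (L : ℝ) (hL : 0 < L) :
    (∃ (lam : ℂ) (θ u : ℝ → ℂ),
      ContDiff ℝ 3 θ ∧ ContDiff ℝ 3 u ∧
      ¬(∀ x ∈ Icc (0 : ℝ) L, θ x = 0 ∧ u x = 0) ∧
      (∀ x ∈ Icc (0 : ℝ) L, -deriv u x - deriv (deriv (deriv u)) x = lam * θ x) ∧
      (∀ x ∈ Icc (0 : ℝ) L, -deriv θ x - deriv (deriv (deriv θ)) x = lam * u x) ∧
      θ 0 = 0 ∧ θ L = 0 ∧ deriv θ 0 = 0 ∧ deriv (deriv θ) L = 0 ∧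
      u 0 = 0 ∧ u L = 0 ∧ deriv u L = 0) ↔
    (∃ (p α α' β γ γ' : ℂ), (α, α', β, γ, γ') ≠ (0, 0, 0, 0, 0) ∧
      ∃ F G : ℂ → ℂ, Differentiable ℂ F ∧ Differentiable ℂ G ∧
        (∀ ξ : ℂ, F ξ * (ξ^3 - ξ + p)
          = α + Complex.I * β * ξ + γ * Complex.exp (-(Complex.I * (L : ℂ) * ξ))
            + Complex.I * γ' * ξ * Complex.exp (-(Complex.I * (L : ℂ) * ξ))) ∧
        (∀ ξ : ℂ, G ξ * (ξ^3 - ξ + p)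
          = α' - Complex.I * β * ξ + γ * Complex.exp (Complex.I * (L : ℂ) * ξ)
            + Complex.I * γ' * ξ * Complex.exp (Complex.I * (L : ℂ) * ξ))) := by
  constructor
  · rintro ⟨lam, θ, u, hθ, hu, hne, hEu, hEθ, t0, tL, t10, t2L, u0, uL, u1L⟩
    obtain ⟨cv, v1, v2, v3⟩ := lin_comb hθ hu 1 1
    obtain ⟨cw, w1, w2, w3⟩ := lin_comb hθ hu 1 (-1)
    set v : ℝ → ℂ := fun x => 1 * θ x + 1 * u x with hv
    set w : ℝ → ℂ := fun x => 1 * θ x + (-1) * u x with hw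
    have ev : ∀ x ∈ Icc (0 : ℝ) L, -deriv v x - deriv (deriv (deriv v)) x = lam * v x := by
      intro x hx
      rw [v1, v3]
      simp only [hv]
      linear_combination hEu x hx + hEθ x hx
    have ew : ∀ x ∈ Icc (0 : ℝ) L, -deriv w x - deriv (deriv (deriv w)) x = (-lam) * w x := by
      intro x hx
      rw [w1, w3]
      simp only [hw]
      linear_combination - hEu x hx + hEθ x hx
    have v00 : v 0 = 0 := by simp [hv, t0, u0]
    have vL0 : v L = 0 := by simp [hv, tL, uL]
    have w00 : w 0 = 0 := by simp [hw, t0, u0]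
    have wL0 : w L = 0 := by simp [hw, tL, uL]
    have r1 : deriv w 0 = - deriv v 0 := by rw [w1, v1, t10]; ring
    have r2 : deriv (deriv w) L = - deriv (deriv v) L := by rw [w2, v2, t2L]; ring
    have r3 : deriv w L = - deriv u L + deriv θ L := by rw [w1]; ring
    have r4 : deriv w L = deriv v L := by rw [w1, v1, u1L]; ring
    refine ⟨Complex.I * lam, Complex.I * deriv (deriv v) 0, -Complex.I * deriv (deriv w) 0,
      Complex.I * deriv v 0, -Complex.I * deriv (deriv v) L, -Complex.I * deriv v L, ?_,
      FT L v, fun ξ => FT L w (-ξ), FT_diff L v cv.continuous,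
      (FT_diff L w cw.continuous).comp differentiable_neg, ?_, ?_⟩
    · intro h0
      simp only [Prod.mk.injEq, mul_eq_zero, neg_eq_zero, Complex.I_ne_zero, false_or] at h0
      obtain ⟨-, -, -, hg, hg'⟩ := h0
      have zv := ode_unique L lam v cv ev vL0 hg' hg
      have zw := ode_unique L (-lam) w cw ew wL0 (r4.trans hg') (by rw [r2, hg, neg_zero])
      apply hne
      intro x hx
      have a1 := zv x hx
      have a2 := zw x hx
      simp only [hv, hw] at a1 a2
      exact ⟨by linear_combination (a1 + a2) / 2, by linear_combination (a1 - a2) / 2⟩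
    · intro ξ
      rw [FT_eq L hL lam v cv ev ξ, v00, vL0]
      ring
    · intro ξ
      have h1 := FT_eq L hL (-lam) w cw ew (-ξ)
      rw [w00, wL0, r1, r2, r4] at h1
      rw [show -(Complex.I * (L : ℂ) * -ξ) = Complex.I * (L : ℂ) * ξ by ring] at h1
      simp only
      linear_combination -h1
  · rintro ⟨p, α, α', β, γ, γ', hne, F, G, hF, hG, eF, eG⟩
    obtain ⟨v, cv, ev, vL, v1L, v2L⟩ := ode_exists L (-Complex.I * p) (Complex.I * γ')
      (Complex.I * γ)
    obtain ⟨w, cw, ew, wL, w1L, w2L⟩ := ode_exists L (Complex.I * p) (Complex.I * γ')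
      (-Complex.I * γ)
    have I2 := Complex.I_sq
    have qv := entire_quot p (α - Complex.I * (deriv (deriv v) 0 + v 0))
      (Complex.I * β + deriv v 0) (Complex.I * v 0) (fun ξ => F ξ - FT L v ξ)
      (hF.sub (FT_diff L v cv.continuous)) (by
        intro ξ
        have h1 := FT_eq L hL _ v cv (fun x _ => ev x) ξ
        rw [vL, v1L, v2L] at h1
        have h2 := eF ξ
        generalize Complex.exp (-(Complex.I * (L : ℂ) * ξ)) = E at h1 h2
        linear_combination h2 - h1 - (p * FT L v ξ) * I2
          + (E * γ + Complex.I * E * γ' * ξ - ξ * deriv v 0) * I2)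
    have qw := entire_quot p (α' + Complex.I * (deriv (deriv w) 0 + w 0))
      (-Complex.I * β + deriv w 0) (-Complex.I * w 0) (fun ξ => G ξ - FT L w (-ξ))
      (hG.sub ((FT_diff L w cw.continuous).comp differentiable_neg)) (by
        intro ξ
        have h1 := FT_eq L hL _ w cw (fun x _ => ew x) (-ξ)
        rw [show -(Complex.I * (L : ℂ) * -ξ) = Complex.I * (L : ℂ) * ξ by ring] at h1
        rw [wL, w1L, w2L] at h1
        have h2 := eG ξ
        generalize Complex.exp (Complex.I * (L : ℂ) * ξ) = E at h1 h2
        linear_combination h2 + h1 - (p * FT L w (-ξ)) * I2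
          + (E * γ + Complex.I * E * γ' * ξ - ξ * deriv w 0) * I2)
    obtain ⟨va, vb, vc⟩ := qv
    obtain ⟨wa, wb, wc⟩ := qw
    have v0 : v 0 = 0 := by simpa using vc
    have w0 : w 0 = 0 := by simpa using wc
    obtain ⟨ct, t1, t2, t3⟩ := lin_comb cv cw (1/2) (1/2)
    obtain ⟨cu, u1, u2, u3⟩ := lin_comb cv cw (1/2) (-1/2)
    refine ⟨-Complex.I * p, _, _, ct, cu, ?_, ?_, ?_, ?_, ?_, ?_, ?_, ?_, ?_, ?_⟩
    · intro hz
      have zv : ∀ x ∈ Icc (0 : ℝ) L, v x = 0 := fun x hx => by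
        obtain ⟨a1, a2⟩ := hz x hx
        linear_combination a1 + a2
      have zw : ∀ x ∈ Icc (0 : ℝ) L, w x = 0 := fun x hx => by
        obtain ⟨a1, a2⟩ := hz x hx
        linear_combination a1 - a2
      obtain ⟨z1, z2, z3, z4⟩ := zero_derivs L hL v cv zv
      obtain ⟨y1, y2, y3, y4⟩ := zero_derivs L hL w cw zw
      apply hne
      rw [z3] at v1L
      rw [z4] at v2L
      have g' : γ' = 0 := by simpa using v1L.symm
      have g : γ = 0 := by simpa using v2L.symm
      have hb : β = 0 := by simpa [z1] using vb
      have ha : α = 0 := by simpa [z2, v0] using va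
      have ha' : α' = 0 := by simpa [y2, w0] using wa
      rw [g', g, hb, ha, ha']
    · intro x _
      rw [u1, u3]
      linear_combination (ev x - ew x) / 2
    · intro x _
      rw [t1, t3]
      linear_combination (ev x + ew x) / 2
    · simp [v0, w0]
    · simp [vL, wL]
    · rw [t1]; linear_combination (vb + wb) / 2
    · rw [t2, v2L, w2L]; ring
    · simp [v0, w0]
    · simp [vL, wL]
    · rw [u1, v1L, w1L]; ring
end

section
/- Let L > 0, T > 0, and let (η, v) be a classical solution of the homogeneous linearized KdV–KdV system on [0,T] × [0,L]. Then (3/2)·∫₀^T ∫₀^L (η_x² + v_x²) dx dt − (1/2)·∫₀^T ∫₀^L (η² + v²) dx dt + ∫₀^L x·η(T,x)·v(T,x) dx − ∫₀^L x·η(0,x)·v(0,x) dx − (L/2)·∫₀^T η_x(t,L)² dt = 0. -/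
open Set MeasureTheory

/-- Partial derivative in the first (time) variable. -/
noncomputable def pt (f : ℝ → ℝ → ℝ) : ℝ → ℝ → ℝ := fun t x => deriv (fun s => f s x) t

/-- Partial derivative in the second (space) variable. -/
noncomputable def px (f : ℝ → ℝ → ℝ) : ℝ → ℝ → ℝ := fun t x => deriv (fun y => f t y) x

/-- `(η, v)` is a classical solution of the homogeneous linearized KdV–KdV system on
`[0,T] × [0,L]`: the time derivatives and the spatial derivatives up to order `3` exist and are
continuous on `[0,T] × [0,L]`, the equations `η_t + v_x + v_{xxx} = 0`,
`v_t + η_x + η_{xxx} = 0` hold, and the boundary conditions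
`η(t,0) = η(t,L) = η_x(t,0) = 0`, `v(t,0) = v(t,L) = v_x(t,L) = 0` hold. -/
def IsClassicalSolution (L T : ℝ) (η v : ℝ → ℝ → ℝ) : Prop :=
  (∀ x, Differentiable ℝ fun t => η t x) ∧
  (∀ x, Differentiable ℝ fun t => v t x) ∧
  (∀ t, ContDiff ℝ 3 (η t)) ∧
  (∀ t, ContDiff ℝ 3 (v t)) ∧
  ContinuousOn (fun q : ℝ × ℝ => η q.1 q.2) (Icc 0 T ×ˢ Icc 0 L) ∧
  ContinuousOn (fun q : ℝ × ℝ => v q.1 q.2) (Icc 0 T ×ˢ Icc 0 L) ∧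
  ContinuousOn (fun q : ℝ × ℝ => pt η q.1 q.2) (Icc 0 T ×ˢ Icc 0 L) ∧
  ContinuousOn (fun q : ℝ × ℝ => pt v q.1 q.2) (Icc 0 T ×ˢ Icc 0 L) ∧
  ContinuousOn (fun q : ℝ × ℝ => px η q.1 q.2) (Icc 0 T ×ˢ Icc 0 L) ∧
  ContinuousOn (fun q : ℝ × ℝ => px v q.1 q.2) (Icc 0 T ×ˢ Icc 0 L) ∧
  ContinuousOn (fun q : ℝ × ℝ => px (px η) q.1 q.2) (Icc 0 T ×ˢ Icc 0 L) ∧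
  ContinuousOn (fun q : ℝ × ℝ => px (px v) q.1 q.2) (Icc 0 T ×ˢ Icc 0 L) ∧
  ContinuousOn (fun q : ℝ × ℝ => px (px (px η)) q.1 q.2) (Icc 0 T ×ˢ Icc 0 L) ∧
  ContinuousOn (fun q : ℝ × ℝ => px (px (px v)) q.1 q.2) (Icc 0 T ×ˢ Icc 0 L) ∧
  (∀ t ∈ Icc (0 : ℝ) T, ∀ x ∈ Icc (0 : ℝ) L,
    pt η t x + px v t x + px (px (px v)) t x = 0) ∧
  (∀ t ∈ Icc (0 : ℝ) T, ∀ x ∈ Icc (0 : ℝ) L,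
    pt v t x + px η t x + px (px (px η)) t x = 0) ∧
  (∀ t ∈ Icc (0 : ℝ) T, η t 0 = 0 ∧ η t L = 0 ∧ px η t 0 = 0) ∧
  (∀ t ∈ Icc (0 : ℝ) T, v t 0 = 0 ∧ v t L = 0 ∧ px v t L = 0)

theorem rect_integrable {L T : ℝ} {f : ℝ → ℝ → ℝ}
    (hf : ContinuousOn (fun q : ℝ × ℝ => f q.1 q.2) (Icc 0 T ×ˢ Icc 0 L)) :
    Integrable (Function.uncurry f)
      ((volume.restrict (Ioc (0:ℝ) T)).prod (volume.restrict (Ioc (0:ℝ) L))) := by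
  rw [Measure.prod_restrict]
  have h : IntegrableOn (fun q : ℝ × ℝ => f q.1 q.2) (Icc 0 T ×ˢ Icc 0 L)
      ((volume : Measure ℝ).prod volume) :=
    hf.integrableOn_compact (isCompact_Icc.prod isCompact_Icc)
  exact h.mono_set (prod_mono Ioc_subset_Icc_self Ioc_subset_Icc_self)

theorem rect_left {L T : ℝ} (hL : 0 < L) (hT : 0 < T) {f : ℝ → ℝ → ℝ}
    (hf : ContinuousOn (fun q : ℝ × ℝ => f q.1 q.2) (Icc 0 T ×ˢ Icc 0 L)) :
    IntervalIntegrable (fun t => ∫ x in (0:ℝ)..L, f t x) volume 0 T := by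
  rw [intervalIntegrable_iff_integrableOn_Ioc_of_le hT.le]
  simp only [intervalIntegral.integral_of_le hL.le]
  exact (rect_integrable hf).integral_prod_left

theorem rect_swap {L T : ℝ} (hL : 0 < L) (hT : 0 < T) {f : ℝ → ℝ → ℝ}
    (hf : ContinuousOn (fun q : ℝ × ℝ => f q.1 q.2) (Icc 0 T ×ˢ Icc 0 L)) :
    ∫ t in (0:ℝ)..T, ∫ x in (0:ℝ)..L, f t x = ∫ x in (0:ℝ)..L, ∫ t in (0:ℝ)..T, f t x := by
  simp only [intervalIntegral.integral_of_le hL.le, intervalIntegral.integral_of_le hT.le]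
  exact integral_integral_swap (rect_integrable hf)

theorem slice_t {L T x : ℝ} (hT : 0 < T) (hx : x ∈ Icc 0 L) {f : ℝ → ℝ → ℝ}
    (hf : ContinuousOn (fun q : ℝ × ℝ => f q.1 q.2) (Icc 0 T ×ˢ Icc 0 L)) :
    IntervalIntegrable (fun t => f t x) volume 0 T := by
  apply ContinuousOn.intervalIntegrable
  rw [uIcc_of_le hT.le]
  exact hf.comp (f := fun t : ℝ => (t, x)) (by fun_prop) (fun t ht => ⟨ht, hx⟩)

theorem slice_x {L T t : ℝ} (hL : 0 < L) (ht : t ∈ Icc 0 T) {f : ℝ → ℝ → ℝ}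
    (hf : ContinuousOn (fun q : ℝ × ℝ => f q.1 q.2) (Icc 0 T ×ˢ Icc 0 L)) :
    IntervalIntegrable (fun x => f t x) volume 0 L := by
  apply ContinuousOn.intervalIntegrable
  rw [uIcc_of_le hL.le]
  exact hf.comp (f := fun x : ℝ => (t, x)) (by fun_prop) (fun x hx => ⟨ht, hx⟩)

theorem px_has {f : ℝ → ℝ → ℝ} {t : ℝ} (hf : ContDiff ℝ 3 (f t)) (x : ℝ) :
    HasDerivAt (f t) (px f t x) x ∧ HasDerivAt (px f t) (px (px f) t x) x ∧
      HasDerivAt (px (px f) t) (px (px (px f)) t x) x := by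
  have h1 : ContDiff ℝ 2 (px f t) := by
    have : ContDiff ℝ (2+1) (f t) := by convert hf using 1; norm_num
    exact (contDiff_succ_iff_deriv.1 this).2.2
  have h2 : ContDiff ℝ 1 (px (px f) t) := by
    have : ContDiff ℝ (1+1) (px f t) := by convert h1 using 1; norm_num
    exact (contDiff_succ_iff_deriv.1 this).2.2
  exact ⟨(hf.differentiable (by norm_num) x).hasDerivAt,
    (h1.differentiable (by norm_num) x).hasDerivAt,
    (h2.differentiable (by norm_num) x).hasDerivAt⟩

/-- The Morawetz-multiplier identity for classical solutions of the homogeneous linearized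
KdV–KdV system. -/
theorem statement_13 (L T : ℝ) (hL : 0 < L) (hT : 0 < T)
    (η v : ℝ → ℝ → ℝ) (hsol : IsClassicalSolution L T η v) :
    (3/2) * (∫ t in (0:ℝ)..T, ∫ x in (0:ℝ)..L, ((px η t x)^2 + (px v t x)^2))
      - (1/2) * (∫ t in (0:ℝ)..T, ∫ x in (0:ℝ)..L, ((η t x)^2 + (v t x)^2))
      + (∫ x in (0:ℝ)..L, x * η T x * v T x)
      - (∫ x in (0:ℝ)..L, x * η 0 x * v 0 x)
      - (L/2) * (∫ t in (0:ℝ)..T, (px η t L)^2) = 0 := by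
  obtain ⟨dη, dv, cη, cv, c1, c2, c3, c4, c5, c6, -, -, -, -, e1, e2, b1, b2⟩ := hsol
  have hA : ContinuousOn (fun q : ℝ × ℝ => (px η q.1 q.2)^2 + (px v q.1 q.2)^2)
    (Icc 0 T ×ˢ Icc 0 L) := (c5.pow 2).add (c6.pow 2)
  have hB : ContinuousOn (fun q : ℝ × ℝ => (η q.1 q.2)^2 + (v q.1 q.2)^2)
    (Icc 0 T ×ˢ Icc 0 L) := (c1.pow 2).add (c2.pow 2)
  have hC : ContinuousOn (fun q : ℝ × ℝ => q.2 * (pt η q.1 q.2 * v q.1 q.2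
      + η q.1 q.2 * pt v q.1 q.2)) (Icc 0 T ×ˢ Icc 0 L) :=
    continuousOn_snd.mul ((c3.mul c2).add (c1.mul c4))
  have hE : ContinuousOn (fun q : ℝ × ℝ => q.2 * η q.1 q.2 * v q.1 q.2)
      (Icc 0 T ×ˢ Icc 0 L) := (continuousOn_snd.mul c1).mul c2
  have h0 : (0:ℝ) ∈ Icc 0 T := ⟨le_rfl, hT.le⟩
  have h1 : T ∈ Icc 0 T := ⟨hT.le, le_rfl⟩
  have hLm : L ∈ Icc 0 L := ⟨hL.le, le_rfl⟩
  -- time part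
  have key1 : (∫ x in (0:ℝ)..L, x * η T x * v T x) - (∫ x in (0:ℝ)..L, x * η 0 x * v 0 x)
      = ∫ t in (0:ℝ)..T, ∫ x in (0:ℝ)..L, x * (pt η t x * v t x + η t x * pt v t x) := by
    rw [rect_swap hL hT (f := fun t x => x * (pt η t x * v t x + η t x * pt v t x)) hC,
      ← intervalIntegral.integral_sub
        (slice_x hL h1 (f := fun t x => x * η t x * v t x) hE)
        (slice_x hL h0 (f := fun t x => x * η t x * v t x) hE)]
    apply intervalIntegral.integral_congr
    intro x hx
    rw [uIcc_of_le hL.le] at hx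
    refine (intervalIntegral.integral_eq_sub_of_hasDerivAt (f := fun t => x * η t x * v t x)
      (fun t _ => ?_)
      (slice_t hT hx (f := fun t x => x * (pt η t x * v t x + η t x * pt v t x)) hC)).symm
    have g1 : HasDerivAt (fun s => η s x) (pt η t x) t := (dη x t).hasDerivAt
    have g2 : HasDerivAt (fun s => v s x) (pt v t x) t := (dv x t).hasDerivAt
    refine ((g1.const_mul x).mul g2).congr_deriv ?_
    ring
  -- space part
  have key2 : ∀ t ∈ Icc (0:ℝ) T,
      (1/2) * (∫ x in (0:ℝ)..L, ((η t x)^2 + (v t x)^2))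
      - (3/2) * (∫ x in (0:ℝ)..L, ((px η t x)^2 + (px v t x)^2))
      - (∫ x in (0:ℝ)..L, x * (pt η t x * v t x + η t x * pt v t x))
      = - (L/2) * (px η t L)^2 := by
    intro t ht
    have iA := slice_x hL ht (f := fun t x => (px η t x)^2 + (px v t x)^2) hA
    have iB := slice_x hL ht (f := fun t x => (η t x)^2 + (v t x)^2) hB
    have iC := slice_x hL ht (f := fun t x => x * (pt η t x * v t x + η t x * pt v t x)) hC
    rw [← intervalIntegral.integral_const_mul, ← intervalIntegral.integral_const_mul,
      ← intervalIntegral.integral_sub (iB.const_mul _) (iA.const_mul _),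
      ← intervalIntegral.integral_sub ((iB.const_mul _).sub (iA.const_mul _)) iC]
    rw [intervalIntegral.integral_eq_sub_of_hasDerivAt
      (f := fun x => x * ((η t x * η t x + v t x * v t x) / 2
          + (η t x * px (px η) t x + v t x * px (px v) t x)
          - (px η t x * px η t x + px v t x * px v t x) / 2)
          - (η t x * px η t x + v t x * px v t x)) ?_
      (((iB.const_mul _).sub (iA.const_mul _)).sub iC)]
    · obtain ⟨p1, p2, p3⟩ := b1 t ht
      obtain ⟨q1, q2, q3⟩ := b2 t ht
      simp only [p1, p2, p3, q1, q2, q3]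
      ring
    · intro x hx
      rw [uIcc_of_le hL.le] at hx
      obtain ⟨a0, a1, a2⟩ := px_has (cη t) x
      obtain ⟨w0, w1, w2⟩ := px_has (cv t) x
      have E1 := e1 t ht x hx
      have E2 := e2 t ht x hx
      have := ((hasDerivAt_id x).mul (((((a0.mul a0).add (w0.mul w0)).div_const 2).add
        ((a0.mul a2).add (w0.mul w2))).sub (((a1.mul a1).add (w1.mul w1)).div_const 2))).sub
        ((a0.mul a1).add (w0.mul w1))
      refine this.congr_deriv ?_
      simp only [id, Pi.add_apply, Pi.mul_apply, Pi.sub_apply]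
      have E1' : pt η t x = - px v t x - px (px (px v)) t x := by linarith
      have E2' : pt v t x = - px η t x - px (px (px η)) t x := by linarith
      rw [E1', E2']
      ring
  have jA := rect_left hL hT (f := fun t x => (px η t x)^2 + (px v t x)^2) hA
  have jB := rect_left hL hT (f := fun t x => (η t x)^2 + (v t x)^2) hB
  have jC := rect_left hL hT (f := fun t x => x * (pt η t x * v t x + η t x * pt v t x)) hC
  have key3 := intervalIntegral.integral_congr (μ := volume) (a := 0) (b := T)
    (fun t ht => key2 t (by rwa [uIcc_of_le hT.le] at ht))
  rw [intervalIntegral.integral_sub ((jB.const_mul _).sub (jA.const_mul _)) jC,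
    intervalIntegral.integral_sub (jB.const_mul _) (jA.const_mul _),
    intervalIntegral.integral_const_mul, intervalIntegral.integral_const_mul,
    intervalIntegral.integral_const_mul] at key3
  linarith
end

section
/- Let L > 0, T > 0, α ∈ ℝ, and let (η, v) be a pair of real-valued functions on [0,T] × [0,L] whose partial derivatives ∂_t η, ∂_t v and ∂_x^j η, ∂_x^j v for j ≤ 3 exist and are continuous, which satisfy η_t + v_x + v_{xxx} = 0 and v_t + η_x + η_{xxx} = 0 on [0,T] × [0,L], with boundary conditions η(t,0) = η(t,L) = η_x(t,0) = 0, v(t,0) = v(t,L) = 0, and the feedback condition v_x(t,L) = −α·η_x(t,L) for all t ∈ [0,T]. Then (1/2)·∫₀^L [η(T,x)² + v(T,x)²] dx − (1/2)·∫₀^L [η(0,x)² + v(0,x)²] dx + α·∫₀^T η_x(t,L)² dt = 0. -/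
open Set MeasureTheory

/-- The energy identity for classical solutions of the linearized KdV–KdV system with the
feedback boundary condition `v_x(t,L) = −α η_x(t,L)`. -/
theorem statement_16 (L T α : ℝ) (hL : 0 < L) (hT : 0 < T)
    (η v : ℝ → ℝ → ℝ)
    (hηt : ∀ x, Differentiable ℝ fun t => η t x)
    (hvt : ∀ x, Differentiable ℝ fun t => v t x)
    (hηx : ∀ t, ContDiff ℝ 3 (η t))
    (hvx : ∀ t, ContDiff ℝ 3 (v t))
    (hηc : ContinuousOn (fun q : ℝ × ℝ => η q.1 q.2) (Icc 0 T ×ˢ Icc 0 L))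
    (hvc : ContinuousOn (fun q : ℝ × ℝ => v q.1 q.2) (Icc 0 T ×ˢ Icc 0 L))
    (hηtc : ContinuousOn (fun q : ℝ × ℝ => pt η q.1 q.2) (Icc 0 T ×ˢ Icc 0 L))
    (hvtc : ContinuousOn (fun q : ℝ × ℝ => pt v q.1 q.2) (Icc 0 T ×ˢ Icc 0 L))
    (hηx1 : ContinuousOn (fun q : ℝ × ℝ => px η q.1 q.2) (Icc 0 T ×ˢ Icc 0 L))
    (hvx1 : ContinuousOn (fun q : ℝ × ℝ => px v q.1 q.2) (Icc 0 T ×ˢ Icc 0 L))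
    (hηx2 : ContinuousOn (fun q : ℝ × ℝ => px (px η) q.1 q.2) (Icc 0 T ×ˢ Icc 0 L))
    (hvx2 : ContinuousOn (fun q : ℝ × ℝ => px (px v) q.1 q.2) (Icc 0 T ×ˢ Icc 0 L))
    (hηx3 : ContinuousOn (fun q : ℝ × ℝ => px (px (px η)) q.1 q.2) (Icc 0 T ×ˢ Icc 0 L))
    (hvx3 : ContinuousOn (fun q : ℝ × ℝ => px (px (px v)) q.1 q.2) (Icc 0 T ×ˢ Icc 0 L))
    (heq1 : ∀ t ∈ Icc (0 : ℝ) T, ∀ x ∈ Icc (0 : ℝ) L,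
      pt η t x + px v t x + px (px (px v)) t x = 0)
    (heq2 : ∀ t ∈ Icc (0 : ℝ) T, ∀ x ∈ Icc (0 : ℝ) L,
      pt v t x + px η t x + px (px (px η)) t x = 0)
    (hbη : ∀ t ∈ Icc (0 : ℝ) T, η t 0 = 0 ∧ η t L = 0 ∧ px η t 0 = 0)
    (hbv : ∀ t ∈ Icc (0 : ℝ) T, v t 0 = 0 ∧ v t L = 0)
    (hfb : ∀ t ∈ Icc (0 : ℝ) T, px v t L = -α * px η t L) :
    (1/2) * (∫ x in (0:ℝ)..L, ((η T x)^2 + (v T x)^2))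
      - (1/2) * (∫ x in (0:ℝ)..L, ((η 0 x)^2 + (v 0 x)^2))
      + α * (∫ t in (0:ℝ)..T, (px η t L)^2) = 0 := by
  have cη : ∀ t, ContDiff ℝ 2 (px η t) := fun t => by
    have := ((contDiff_succ_iff_deriv (n := 2)).1 ((hηx t).of_le (le_of_eq (by norm_num)))).2.2
    exact this
  have cv : ∀ t, ContDiff ℝ 2 (px v t) := fun t => by
    have := ((contDiff_succ_iff_deriv (n := 2)).1 ((hvx t).of_le (le_of_eq (by norm_num)))).2.2
    exact this
  have cη2 : ∀ t, ContDiff ℝ 1 (px (px η) t) := fun t => by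
    have := ((contDiff_succ_iff_deriv (n := 1)).1 ((cη t).of_le (le_of_eq (by norm_num)))).2.2
    exact this
  have cv2 : ∀ t, ContDiff ℝ 1 (px (px v) t) := fun t => by
    have := ((contDiff_succ_iff_deriv (n := 1)).1 ((cv t).of_le (le_of_eq (by norm_num)))).2.2
    exact this
  set F : ℝ → ℝ → ℝ := fun t x => η t x * pt η t x + v t x * pt v t x with hF
  have hFc : ContinuousOn (fun q : ℝ × ℝ => F q.1 q.2) (Icc 0 T ×ˢ Icc 0 L) :=
    (hηc.mul hηtc).add (hvc.mul hvtc)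
  -- slices
  have hFt : ∀ x ∈ Icc (0:ℝ) L, ContinuousOn (fun t => F t x) (Icc 0 T) := fun x hx =>
    hFc.comp (f := fun t : ℝ => (t, x)) (by fun_prop) (fun t ht => ⟨ht, hx⟩)
  have hFx : ∀ t ∈ Icc (0:ℝ) T, ContinuousOn (fun x => F t x) (Icc 0 L) := fun t ht =>
    hFc.comp (f := fun x : ℝ => (t, x)) (by fun_prop) (fun x hx => ⟨ht, hx⟩)
  have hI1 : ∀ x ∈ Icc (0:ℝ) L, ∫ t in (0:ℝ)..T, F t x
      = (1/2) * ((η T x)^2 + (v T x)^2) - (1/2) * ((η 0 x)^2 + (v 0 x)^2) := by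
    intro x hx
    refine intervalIntegral.integral_eq_sub_of_hasDerivAt
      (f := fun t => (1/2) * ((η t x)^2 + (v t x)^2)) (fun t _ => ?_) ?_
    · have h1 : HasDerivAt (fun s => η s x) (pt η t x) t := (hηt x t).hasDerivAt
      have h2 : HasDerivAt (fun s => v s x) (pt v t x) t := (hvt x t).hasDerivAt
      refine (((h1.pow 2).add (h2.pow 2)).const_mul (1/2)).congr_deriv ?_
      simp [hF]; ring
    · apply ContinuousOn.intervalIntegrable
      rw [uIcc_of_le hT.le]
      exact hFt x hx
  have hI2 : ∀ t ∈ Icc (0:ℝ) T, ∫ x in (0:ℝ)..L, F t x = -α * (px η t L)^2 := by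
    intro t ht
    have key : ∫ x in (0:ℝ)..L, F t x
        = (fun x => px η t x * px v t x - η t x * v t x - η t x * px (px v) t x
            - v t x * px (px η) t x) L
          - (fun x => px η t x * px v t x - η t x * v t x - η t x * px (px v) t x
            - v t x * px (px η) t x) 0 := by
      refine intervalIntegral.integral_eq_sub_of_hasDerivAt
        (f := fun x => px η t x * px v t x - η t x * v t x - η t x * px (px v) t x
            - v t x * px (px η) t x) (fun x hx => ?_) ?_
      · rw [uIcc_of_le hL.le] at hx
        have a0 : HasDerivAt (η t) (px η t x) x :=
          ((hηx t).differentiable (by norm_num) x).hasDerivAt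
        have b0 : HasDerivAt (v t) (px v t x) x :=
          ((hvx t).differentiable (by norm_num) x).hasDerivAt
        have a1 : HasDerivAt (px η t) (px (px η) t x) x :=
          ((cη t).differentiable (by norm_num) x).hasDerivAt
        have b1 : HasDerivAt (px v t) (px (px v) t x) x :=
          ((cv t).differentiable (by norm_num) x).hasDerivAt
        have a2 : HasDerivAt (px (px η) t) (px (px (px η)) t x) x :=
          ((cη2 t).differentiable (by norm_num) x).hasDerivAt
        have b2 : HasDerivAt (px (px v) t) (px (px (px v)) t x) x :=
          ((cv2 t).differentiable (by norm_num) x).hasDerivAt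
        refine ((((a1.mul b1).sub (a0.mul b0)).sub (a0.mul b2)).sub (b0.mul a2)).congr_deriv ?_
        have e1 := heq1 t ht x hx
        have e2 := heq2 t ht x hx
        simp only [hF]
        linear_combination (-(η t x)) * e1 - v t x * e2
      · apply ContinuousOn.intervalIntegrable
        rw [uIcc_of_le hL.le]
        exact hFx t ht
    obtain ⟨h1, h2, h3⟩ := hbη t ht
    obtain ⟨h4, h5⟩ := hbv t ht
    rw [key]
    simp only [h1, h2, h3, h4, h5, hfb t ht]
    ring
  have hswap : ∫ x in (0:ℝ)..L, ∫ t in (0:ℝ)..T, F t x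
      = ∫ t in (0:ℝ)..T, ∫ x in (0:ℝ)..L, F t x := by
    simp only [intervalIntegral.integral_of_le hL.le, intervalIntegral.integral_of_le hT.le]
    symm
    apply MeasureTheory.integral_integral_swap
    rw [Measure.prod_restrict]
    exact (hFc.integrableOn_compact (isCompact_Icc.prod isCompact_Icc)).mono_set
      (prod_mono Ioc_subset_Icc_self Ioc_subset_Icc_self)
  have hc : ∀ t, IntervalIntegrable (fun x => (1/2) * ((η t x)^2 + (v t x)^2)) volume 0 L := by
    intro t
    have h1 := (hηx t).continuous
    have h2 := (hvx t).continuous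
    exact Continuous.intervalIntegrable (by fun_prop) _ _
  rw [intervalIntegral.integral_congr (g := fun x => (1/2) * ((η T x)^2 + (v T x)^2)
      - (1/2) * ((η 0 x)^2 + (v 0 x)^2)) (fun x hx => hI1 x (by rwa [uIcc_of_le hL.le] at hx)),
    intervalIntegral.integral_congr (a := 0) (b := T) (g := fun t => -α * (px η t L)^2)
      (fun t ht => hI2 t (by rwa [uIcc_of_le hT.le] at ht)),
    intervalIntegral.integral_sub (hc T) (hc 0)] at hswap
  simp only [intervalIntegral.integral_const_mul] at hswap
  linarith
end

section
/- Let L > 0 with L ∉ 𝒩. Then for every continuous function z : [0,L] → ℂ there exists a three times continuously differentiable function y : [0,L] → ℂ such that y(0) = y(L) = y′(L) = 0 and −y‴(L − x) − y′(L − x) = z(x) for all x ∈ [0,L]. -/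
open Set

theorem cos_ne_one_aux (L : ℝ) (hL : 0 < L) (hLN : L ∉ criticalN) : Real.cos L ≠ 1 := by
  intro h
  obtain ⟨n, hn⟩ := (Real.cos_eq_one_iff L).1 h
  have hpi := Real.pi_pos
  have hn0 : 0 < n := by
    by_contra hc
    have h1 : (n : ℝ) ≤ 0 := by exact_mod_cast not_lt.1 hc
    nlinarith
  lift n to ℕ using hn0.le
  have hk : 0 < n := by exact_mod_cast hn0
  refine hLN ⟨n, n, hk, hk, ?_⟩
  have h3 : Real.sqrt 3 ≠ 0 := by positivity
  have : (n : ℝ)^2 + (n : ℝ) * (n : ℝ) + (n : ℝ)^2 = 3 * (n : ℝ)^2 := by ring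
  rw [this, Real.sqrt_mul (by norm_num), Real.sqrt_sq (by positivity), ← hn]
  field_simp
  push_cast
  ring

/-- If `L ∉ 𝒩`, then for every continuous `z : [0,L] → ℂ` there is a `C³` function `y` with
`y(0) = y(L) = y′(L) = 0` and `−y‴(L−x) − y′(L−x) = z(x)` on `[0,L]`. -/
theorem statement_19 (L : ℝ) (hL : 0 < L) (hLN : L ∉ criticalN)
    (z : ℝ → ℂ) (hz : ContinuousOn z (Icc 0 L)) :
    ∃ y : ℝ → ℂ, ContDiff ℝ 3 y ∧ y 0 = 0 ∧ y L = 0 ∧ deriv y L = 0 ∧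
      ∀ x ∈ Icc (0 : ℝ) L, -deriv (deriv (deriv y)) (L - x) - deriv y (L - x) = z x := by
  have hcos := cos_ne_one_aux L hL hLN
  let f : ℝ → ℂ := fun s => -z (max 0 (min L (L - s)))
  have hf : Continuous f := by
    refine Continuous.neg (hz.comp_continuous (by fun_prop) fun s => ⟨le_max_left _ _, ?_⟩)
    exact max_le hL.le (min_le_left _ _)
  have hfz : ∀ x ∈ Icc (0 : ℝ) L, f (L - x) = -z x := by
    intro x hx
    simp [f, hx.1, hx.2]
  clear_value f
  have hint : ∀ g : ℝ → ℂ, Continuous g →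
      ∀ s, HasDerivAt (fun u => ∫ t in L..u, g t) (g s) s := fun g hg s =>
    hg.integral_hasStrictDerivAt L s |>.hasDerivAt
  have hc : ∀ s : ℝ, HasDerivAt (fun u : ℝ => (Real.cos u : ℂ)) (-(Real.sin s : ℂ)) s := by
    intro s
    simpa using (Real.hasDerivAt_cos s).ofReal_comp
  have hs : ∀ s : ℝ, HasDerivAt (fun u : ℝ => (Real.sin u : ℂ)) (Real.cos s : ℂ) s := by
    intro s
    exact (Real.hasDerivAt_sin s).ofReal_comp
  have hcc : Continuous fun u : ℝ => (Real.cos u : ℂ) := by fun_prop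
  have hsc : Continuous fun u : ℝ => (Real.sin u : ℂ) := by fun_prop
  have hp : ∀ s : ℝ, (Real.cos s : ℂ)^2 + (Real.sin s : ℂ)^2 = 1 := by
    intro s
    exact_mod_cast Real.cos_sq_add_sin_sq s
  have hpL := hp L
  obtain ⟨c, hcd⟩ : ∃ c : ℝ → ℂ, c = fun u : ℝ => (Real.cos u : ℂ) := ⟨_, rfl⟩
  obtain ⟨n, hnd⟩ : ∃ n : ℝ → ℂ, n = fun u : ℝ => (Real.sin u : ℂ) := ⟨_, rfl⟩
  have hc' : ∀ s, HasDerivAt c (-(n s)) s := by subst hcd hnd; exact hc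
  have hs' : ∀ s, HasDerivAt n (c s) s := by subst hcd hnd; exact hs
  have hp' : ∀ s, c s ^ 2 + n s ^ 2 = 1 := by subst hcd hnd; exact hp
  have hcc' : Continuous c := by subst hcd; exact hcc
  have hsc' : Continuous n := by subst hnd; exact hsc
  have hc0 : c 0 = 1 := by simp [hcd]
  have hn0 : n 0 = 0 := by simp [hnd]
  have hcL : 1 - c L ≠ 0 := by
    rw [sub_ne_zero]
    subst hcd
    intro h
    have h' : (1 : ℂ) = (Real.cos L : ℂ) := h
    exact hcos (by exact_mod_cast h'.symm)
  clear hcd hnd hc hs hp hcc hsc hpL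
  obtain ⟨A, hA, hAL⟩ : ∃ A : ℝ → ℂ, (∀ s, HasDerivAt A (f s) s) ∧ A L = 0 :=
    ⟨_, hint f hf, by simp⟩
  obtain ⟨B, hB, hBL⟩ : ∃ A : ℝ → ℂ, (∀ s, HasDerivAt A (c s * f s) s) ∧ A L = 0 :=
    ⟨_, hint (fun s => c s * f s) (by fun_prop), by simp⟩
  obtain ⟨D, hD, hDL⟩ : ∃ A : ℝ → ℂ, (∀ s, HasDerivAt A (n s * f s) s) ∧ A L = 0 :=
    ⟨_, hint (fun s => n s * f s) (by fun_prop), by simp⟩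
  obtain ⟨a, ha⟩ : ∃ a : ℂ, A 0 - B 0 + a * (1 - c L) = 0 :=
    ⟨-(A 0 - B 0) / (1 - c L), by field_simp; ring⟩
  -- y and its three derivatives
  let y : ℝ → ℂ := fun s => A s - c s * B s - n s * D s + a * (1 - (c s * c L + n s * n L))
  let y1 : ℝ → ℂ := fun s => n s * B s - c s * D s + a * (n s * c L - c s * n L)
  let y2 : ℝ → ℂ := fun s => c s * B s + n s * D s + a * (c s * c L + n s * n L)
  let y3 : ℝ → ℂ := fun s => f s - y1 s
  have h1 : ∀ s, HasDerivAt y (y1 s) s := by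
    intro s
    have := (((hA s).sub ((hc' s).mul (hB s))).sub ((hs' s).mul (hD s))).add
      (((((hc' s).mul_const (c L)).add ((hs' s).mul_const (n L))).const_sub 1).const_mul a)
    refine this.congr_deriv ?_
    simp only [y1]
    linear_combination (- f s) * hp' s
  have h2 : ∀ s, HasDerivAt y1 (y2 s) s := by
    intro s
    have := (((hs' s).mul (hB s)).sub ((hc' s).mul (hD s))).add
      ((((hs' s).mul_const (c L)).sub ((hc' s).mul_const (n L))).const_mul a)
    refine this.congr_deriv ?_
    simp only [y2]
    ring
  have h3 : ∀ s, HasDerivAt y2 (y3 s) s := by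
    intro s
    have := (((hc' s).mul (hB s)).add ((hs' s).mul (hD s))).add
      ((((hc' s).mul_const (c L)).add ((hs' s).mul_const (n L))).const_mul a)
    refine this.congr_deriv ?_
    simp only [y3, y1]
    linear_combination (f s) * hp' s
  have d1 : deriv y = y1 := funext fun s => (h1 s).deriv
  have d2 : deriv y1 = y2 := funext fun s => (h2 s).deriv
  have d3 : deriv y2 = y3 := funext fun s => (h3 s).deriv
  have c1 : Continuous y1 := continuous_iff_continuousAt.2 fun s => (h2 s).continuousAt
  have c3 : Continuous y3 := hf.sub c1
  have e2 : ContDiff ℝ 1 y2 :=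
    contDiff_one_iff_deriv.2 ⟨fun s => (h3 s).differentiableAt, by rw [d3]; exact c3⟩
  have e1 : ContDiff ℝ (1 + 1) y1 :=
    contDiff_succ_iff_deriv.2 ⟨fun s => (h2 s).differentiableAt, by simp, by rw [d2]; exact e2⟩
  have e0 : ContDiff ℝ ((1 + 1) + 1) y :=
    contDiff_succ_iff_deriv.2 ⟨fun s => (h1 s).differentiableAt, by simp, by rw [d1]; exact e1⟩
  refine ⟨y, ?_, ?_, ?_, ?_, ?_⟩
  · convert e0 using 1
    norm_num
  · simp only [y, hc0, hn0]
    linear_combination ha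
  · simp only [y, hAL, hBL, hDL]
    linear_combination (-a) * hp' L
  · rw [d1]
    simp only [y1, hBL, hDL]
    ring
  · intro x hx
    rw [d1, d2, d3]
    simp only [y3, hfz x hx]
    ring
end
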